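/- arXiv:2110.08972 — 15 statements merged into one kernel-verified Lean document; each statement's English description precedes it below -/
import Mathlib

section
/- Let q be a prime power and F a finite field with q elements. If S is an intersecting subset of GL(2,F) for the natural action on the nonzero vectors of F² (i.e., for all g, h ∈ S there is a nonzero v ∈ F² with g v = h v), then |S| ≤ q(q-1). Moreover, this bound is attained: for any nonzero x ∈ F², the stabilizer {g ∈ GL(2,F) : g x = x} is an intersecting set of size exactly q(q-1). -/
theorem gl2_aux_nonres (F : Type*) [Field F] [Fintype F] : ∃ c : F, ∀ x : F, x ^ 2 - x ≠ c := by
  by_contra! h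
  have hs : Function.Surjective (fun x : F => x ^ 2 - x) := fun c => h c
  have hi := Finite.injective_iff_surjective.mpr hs
  have := @hi 0 1 (by simp)
  simp at this

theorem gl2_aux_det (F : Type*) [Field F] (c : F) (hc : ∀ x : F, x ^ 2 - x ≠ c) (a b : F)
    (h : a * (a + b) - b * c * b = 0) : a = 0 ∧ b = 0 := by
  by_cases hb : b = 0
  · subst hb
    simpa using h
  · exfalso
    apply hc (-a / b)
    field_simp
    linear_combination h

theorem gl2_aux_card (F : Type*) [Field F] [Fintype F] [DecidableEq F] :
    Fintype.card (GL (Fin 2) F) =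
      (Fintype.card F ^ 2 - 1) * (Fintype.card F * (Fintype.card F - 1)) := by
  have h := Matrix.card_GL_field (𝔽 := F) 2
  rw [Nat.card_eq_fintype_card] at h
  rw [h, Fin.prod_univ_two]
  simp [pow_two, Nat.mul_sub]

theorem gl2_aux_nz (F : Type*) [Field F] [Fintype F] [DecidableEq F] :
    (Finset.univ.filter (fun v : Fin 2 → F => v ≠ 0)).card = Fintype.card F ^ 2 - 1 := by
  rw [Finset.filter_ne', Finset.card_erase_of_mem (Finset.mem_univ _)]
  simp

theorem gl2_aux_pos (F : Type*) [Field F] [Fintype F] : 0 < Fintype.card F ^ 2 - 1 := by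
  have := Fintype.one_lt_card (α := F)
  have : 1 < Fintype.card F ^ 2 := Nat.one_lt_pow (by norm_num) this
  omega

theorem gl2_aux_bound (F : Type*) [Field F] [Fintype F] (S : Set (GL (Fin 2) F))
    (hS : ∀ g ∈ S, ∀ h ∈ S, ∃ v : Fin 2 → F, v ≠ 0 ∧
        (g : Matrix (Fin 2) (Fin 2) F).mulVec v = (h : Matrix (Fin 2) (Fin 2) F).mulVec v) :
    S.ncard ≤ Fintype.card F * (Fintype.card F - 1) := by
  classical
  obtain ⟨c, hc⟩ := gl2_aux_nonres F
  let M : (Fin 2 → F) → Matrix (Fin 2) (Fin 2) F :=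
    fun u => !![u 0, u 1 * c; u 1, u 0 + u 1]
  have hsub : ∀ u w, M u - M w = M (u - w) := by
    intro u w
    ext i j
    fin_cases i <;> fin_cases j <;> simp [M] <;> ring
  have hdet : ∀ u, (M u).det = 0 → u = 0 := by
    intro u hu
    simp only [M, Matrix.det_fin_two_of] at hu
    obtain ⟨h0, h1⟩ := gl2_aux_det F c hc (u 0) (u 1) (by linear_combination hu)
    ext i
    fin_cases i <;> simp [h0, h1]
  let P := {v : Fin 2 → F // v ≠ 0}
  let C : P → GL (Fin 2) F := fun u =>
    Matrix.GeneralLinearGroup.mkOfDetNeZero (M u.1) (fun h => u.2 (hdet _ h))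
  have hC : ∀ u, ((C u : GL (Fin 2) F) : Matrix (Fin 2) (Fin 2) F) = M u.1 := fun u => rfl
  have hinj : Function.Injective (fun p : P × S => C p.1 * p.2.1) := by
    rintro ⟨u, s, hs⟩ ⟨w, t, ht⟩ h
    simp only at h
    obtain ⟨v, hv, hst⟩ := hS s hs t ht
    have hm := congrArg (fun g : GL (Fin 2) F => (g : Matrix (Fin 2) (Fin 2) F).mulVec v) h
    simp only [Units.val_mul, hC, ← Matrix.mulVec_mulVec] at hm
    rw [← hst] at hm
    have hne : (s : Matrix (Fin 2) (Fin 2) F).mulVec v ≠ 0 := by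
      intro h0
      apply hv
      have := congrArg ((s⁻¹ : GL (Fin 2) F) : Matrix (Fin 2) (Fin 2) F).mulVec h0
      rwa [Matrix.mulVec_mulVec, ← Units.val_mul, inv_mul_cancel, Units.val_one,
        Matrix.one_mulVec, Matrix.mulVec_zero] at this
    have h0 : (M (u.1 - w.1)).mulVec ((s : Matrix (Fin 2) (Fin 2) F).mulVec v) = 0 := by
      rw [← hsub, Matrix.sub_mulVec, hm, sub_self]
    have hd := hdet _ (Matrix.exists_mulVec_eq_zero_iff.mp ⟨_, hne, h0⟩)
    have huw : u = w := Subtype.ext (sub_eq_zero.mp hd)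
    subst huw
    have hst' : s = t := mul_left_cancel h
    subst hst'
    rfl
  have hcard := Fintype.card_le_of_injective _ hinj
  rw [Fintype.card_prod, gl2_aux_card, Fintype.card_subtype, gl2_aux_nz] at hcard
  rw [← Nat.card_coe_set_eq, Nat.card_eq_fintype_card]
  exact Nat.le_of_mul_le_mul_left hcard (gl2_aux_pos F)

theorem gl2_aux_lower (F : Type*) [Field F] [Fintype F] (x : Fin 2 → F) (hx : x ≠ 0) :
    Fintype.card F * (Fintype.card F - 1) ≤
      {g : GL (Fin 2) F | (g : Matrix (Fin 2) (Fin 2) F).mulVec x = x}.ncard := by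
  classical
  set St := {g : GL (Fin 2) F | (g : Matrix (Fin 2) (Fin 2) F).mulVec x = x} with hSt
  let f : GL (Fin 2) F → (Fin 2 → F) := fun g => (g : Matrix (Fin 2) (Fin 2) F).mulVec x
  have hne : ∀ g, f g ≠ 0 := by
    intro s h0
    apply hx
    have := congrArg ((s⁻¹ : GL (Fin 2) F) : Matrix (Fin 2) (Fin 2) F).mulVec h0
    rwa [Matrix.mulVec_mulVec, ← Units.val_mul, inv_mul_cancel, Units.val_one,
      Matrix.one_mulVec, Matrix.mulVec_zero] at this
  have hfib : ∀ y ∈ Finset.univ.filter (fun v : Fin 2 → F => v ≠ 0),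
      (Finset.univ.filter (fun g => f g = y)).card ≤ St.ncard := by
    intro y _
    rcases (Finset.univ.filter (fun g => f g = y)).eq_empty_or_nonempty with h | ⟨g0, hg0⟩
    · simp [h]
    · rw [← Set.ncard_coe_finset]
      refine Set.ncard_le_ncard_of_injOn (fun g => g0⁻¹ * g) ?_ ?_ (Set.toFinite _)
      · intro g hg
        simp only [Finset.coe_filter, Finset.mem_univ, true_and, Set.mem_setOf_eq,
          Finset.mem_filter] at hg hg0
        change ((g0⁻¹ * g : GL (Fin 2) F) : Matrix (Fin 2) (Fin 2) F).mulVec x = x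
        rw [Units.val_mul, ← Matrix.mulVec_mulVec]
        change Matrix.mulVec _ (f g) = x
        rw [hg, ← hg0]
        change Matrix.mulVec _ (Matrix.mulVec _ x) = x
        rw [Matrix.mulVec_mulVec, ← Units.val_mul, inv_mul_cancel, Units.val_one,
          Matrix.one_mulVec]
      · intro a _ b _ hab
        exact mul_left_cancel hab
  have h := Finset.card_le_mul_card_image_of_maps_to (s := Finset.univ) (f := f)
    (t := Finset.univ.filter (fun v : Fin 2 → F => v ≠ 0)) (by simpa using hne) St.ncard hfib
  rw [gl2_aux_nz, Finset.card_univ, gl2_aux_card, mul_comm St.ncard] at h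
  exact Nat.le_of_mul_le_mul_left h (gl2_aux_pos F)

/-- **EKR property for GL(2,q).**  If `S` is an intersecting subset of `GL(2,F)` for the
natural action on the nonzero vectors of `F²`, then `|S| ≤ q(q-1)`; moreover the
stabilizer of any nonzero vector is an intersecting set of size exactly `q(q-1)`. -/
theorem gl2_ekr (q : ℕ) (hq : IsPrimePow q) (F : Type*) [Field F] [Fintype F]
    (hF : Fintype.card F = q) :
    (∀ S : Set (GL (Fin 2) F),
      (∀ g ∈ S, ∀ h ∈ S, ∃ v : Fin 2 → F, v ≠ 0 ∧
        (g : Matrix (Fin 2) (Fin 2) F).mulVec v = (h : Matrix (Fin 2) (Fin 2) F).mulVec v) →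
      S.ncard ≤ q * (q - 1)) ∧
    (∀ x : Fin 2 → F, x ≠ 0 →
      (∀ g ∈ {g : GL (Fin 2) F | (g : Matrix (Fin 2) (Fin 2) F).mulVec x = x},
        ∀ h ∈ {g : GL (Fin 2) F | (g : Matrix (Fin 2) (Fin 2) F).mulVec x = x},
          ∃ v : Fin 2 → F, v ≠ 0 ∧
            (g : Matrix (Fin 2) (Fin 2) F).mulVec v = (h : Matrix (Fin 2) (Fin 2) F).mulVec v) ∧
      {g : GL (Fin 2) F | (g : Matrix (Fin 2) (Fin 2) F).mulVec x = x}.ncard = q * (q - 1)) := by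
  subst hF
  refine ⟨fun S hS => gl2_aux_bound F S hS, fun x hx => ?_⟩
  have hint : (∀ g ∈ {g : GL (Fin 2) F | (g : Matrix (Fin 2) (Fin 2) F).mulVec x = x},
        ∀ h ∈ {g : GL (Fin 2) F | (g : Matrix (Fin 2) (Fin 2) F).mulVec x = x},
          ∃ v : Fin 2 → F, v ≠ 0 ∧
            (g : Matrix (Fin 2) (Fin 2) F).mulVec v =
              (h : Matrix (Fin 2) (Fin 2) F).mulVec v) := by
    intro g hg h hh
    exact ⟨x, hx, Eq.trans hg (Eq.symm hh)⟩
  exact ⟨hint, le_antisymm (gl2_aux_bound F _ hint) (gl2_aux_lower F x hx)⟩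
end

section
/- Let q be a prime power and F a finite field with q elements. If S is an intersecting subset of SL(2,F) for the natural action on the nonzero vectors of F² (i.e., for all g, h ∈ S there is a nonzero v ∈ F² with g v = h v), then |S| ≤ q. Moreover, for any nonzero x ∈ F², the stabilizer {g ∈ SL(2,F) : g x = x} is an intersecting set of size exactly q. -/
open Matrix in
lemma det_sub_zero {F : Type*} [Field F] (g h : Matrix (Fin 2) (Fin 2) F)
    (H : ∃ v : Fin 2 → F, v ≠ 0 ∧ g.mulVec v = h.mulVec v) : (g - h).det = 0 := by
  obtain ⟨v, hv, e⟩ := H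
  exact Matrix.exists_mulVec_eq_zero_iff.mp ⟨v, hv, by rw [Matrix.sub_mulVec, e, sub_self]⟩

/-- Two trace zero, singular matrices with singular difference are proportional. -/
lemma prop_aux {F : Type*} [Field F] (a b c a' b' c' : F) (h1 : a * a + b * c = 0)
    (h2 : a' * a' + b' * c' = 0) (h3 : (a' - a) * (a' - a) + (b' - b) * (c' - c) = 0)
    (hne : ¬ (a = 0 ∧ b = 0 ∧ c = 0)) : ∃ t : F, a' = t * a ∧ b' = t * b ∧ c' = t * c := by
  have h4 : 2 * a * a' + b * c' + b' * c = 0 := by linear_combination h1 + h2 - h3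
  have e1 : b * c' - b' * c = 0 := by
    apply pow_eq_zero_iff (two_ne_zero) |>.mp
    linear_combination (b * c' + b' * c - 2 * a * a') * h4 + 4 * a' * a' * h1 - 4 * b * c * h2
  have e2 : a * b' - a' * b = 0 := by
    apply pow_eq_zero_iff (two_ne_zero) |>.mp
    linear_combination b' ^ 2 * h1 + b ^ 2 * h2 - b * b' * h4
  have e3 : a * c' - a' * c = 0 := by
    apply pow_eq_zero_iff (two_ne_zero) |>.mp
    linear_combination c' ^ 2 * h1 + c ^ 2 * h2 - c * c' * h4
  by_cases hb : b = 0
  · have ha : a = 0 := by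
      subst hb
      have : a * a = 0 := by linear_combination h1
      simpa using this
    have hc : c ≠ 0 := fun hc => hne ⟨ha, hb, hc⟩
    refine ⟨c' / c, ?_, ?_, ?_⟩ <;> field_simp
    · linear_combination -e3
    · linear_combination -e1
  · refine ⟨b' / b, ?_, ?_, ?_⟩ <;> field_simp
    · linear_combination -e2
    · linear_combination e1

lemma entries_aux {F : Type*} [Field F] (g : Matrix (Fin 2) (Fin 2) F) (hd : g.det = 1)
    (h : (g - 1).det = 0) : g 1 1 = 2 - g 0 0 ∧
      (g 0 0 - 1) * (g 0 0 - 1) + g 0 1 * g 1 0 = 0 := by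
  simp only [Matrix.det_fin_two, Matrix.sub_apply, Matrix.one_apply_eq,
    Matrix.one_apply_ne (show (0 : Fin 2) ≠ 1 by decide),
    Matrix.one_apply_ne (show (1 : Fin 2) ≠ 0 by decide)] at hd h
  have e : g 1 1 = 2 - g 0 0 := by linear_combination hd - h
  refine ⟨e, ?_⟩
  rw [e] at h
  linear_combination -h

lemma bound_one {F : Type*} [Field F] [Fintype F]
    (S : Set (Matrix.SpecialLinearGroup (Fin 2) F)) (h1 : 1 ∈ S)
    (H : ∀ g ∈ S, ∀ h ∈ S,
      ((g : Matrix (Fin 2) (Fin 2) F) - (h : Matrix (Fin 2) (Fin 2) F)).det = 0) :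
    S.ncard ≤ Fintype.card F := by
  have key : ∃ N : Matrix (Fin 2) (Fin 2) F, ∀ g ∈ S, ∃ t : F,
      (1 + t • N) = (g : Matrix (Fin 2) (Fin 2) F) := by
    by_cases hS : ∃ g ∈ S, g ≠ 1
    · obtain ⟨g, hg, hne⟩ := hS
      refine ⟨(g : Matrix (Fin 2) (Fin 2) F) - 1, fun k hk => ?_⟩
      obtain ⟨gd, gq⟩ := entries_aux g g.2 (by simpa using H g hg 1 h1)
      obtain ⟨kd, kq⟩ := entries_aux k k.2 (by simpa using H k hk 1 h1)
      have hgk := H k hk g hg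
      simp only [Matrix.det_fin_two, Matrix.sub_apply, gd, kd] at hgk
      obtain ⟨t, ta, tb, tc⟩ := prop_aux _ _ _ _ _ _ gq kq
        (by linear_combination -hgk) (by
          rintro ⟨ha, hb, hc⟩
          apply hne
          ext i j
          fin_cases i <;> fin_cases j <;> simp [hb, hc, gd]
          · linear_combination ha
          · linear_combination -ha)
      refine ⟨t, ?_⟩
      ext i j
      fin_cases i <;> fin_cases j <;> simp [tb, tc, gd, kd]
      · linear_combination -ta
      · linear_combination ta
    · push Not at hS
      exact ⟨0, fun g hg => ⟨0, by simp [hS g hg]⟩⟩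
  obtain ⟨N, hN⟩ := key
  have hsub : (fun g : Matrix.SpecialLinearGroup (Fin 2) F => (g : Matrix (Fin 2) (Fin 2) F)) '' S
      ⊆ (fun t : F => 1 + t • N) '' Set.univ := by
    rintro _ ⟨g, hg, rfl⟩
    obtain ⟨t, ht⟩ := hN g hg
    exact ⟨t, trivial, ht⟩
  calc S.ncard = _ := (Set.ncard_image_of_injective S Subtype.coe_injective).symm
    _ ≤ _ := Set.ncard_le_ncard hsub (Set.toFinite _)
    _ ≤ _ := Set.ncard_image_le (Set.toFinite _)
    _ = _ := by rw [Set.ncard_univ, Nat.card_eq_fintype_card]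

lemma bound_all {F : Type*} [Field F] [Fintype F]
    (S : Set (Matrix.SpecialLinearGroup (Fin 2) F))
    (H : ∀ g ∈ S, ∀ h ∈ S, ∃ v : Fin 2 → F, v ≠ 0 ∧
        (g : Matrix (Fin 2) (Fin 2) F).mulVec v = (h : Matrix (Fin 2) (Fin 2) F).mulVec v) :
    S.ncard ≤ Fintype.card F := by
  rcases S.eq_empty_or_nonempty with rfl | ⟨g0, h0⟩
  · simp
  rw [← Set.ncard_image_of_injective S (mul_right_injective g0⁻¹)]
  apply bound_one
  · exact ⟨g0, h0, by simp⟩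
  · rintro _ ⟨g, hg, rfl⟩ _ ⟨h, hh, rfl⟩
    simp only [Matrix.SpecialLinearGroup.coe_mul]
    rw [← mul_sub, Matrix.det_mul, det_sub_zero _ _ (H g hg h hh), mul_zero]

lemma stab_lower {F : Type*} [Field F] [Fintype F] (x : Fin 2 → F) (hx : x ≠ 0) :
    Fintype.card F ≤ {g : Matrix.SpecialLinearGroup (Fin 2) F |
        (g : Matrix (Fin 2) (Fin 2) F).mulVec x = x}.ncard := by
  let f : F → Matrix.SpecialLinearGroup (Fin 2) F := fun t =>
    ⟨!![1 - t * x 0 * x 1, t * x 0 ^ 2; -t * x 1 ^ 2, 1 + t * x 0 * x 1], by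
      rw [Matrix.det_fin_two_of]; ring⟩
  have hf : Function.Injective f := by
    intro s t hst
    have h01 : s * x 0 ^ 2 = t * x 0 ^ 2 := congrArg (fun g => g.1 0 1) hst
    have h10 : -s * x 1 ^ 2 = -t * x 1 ^ 2 := congrArg (fun g => g.1 1 0) hst
    by_cases h0 : x 0 = 0
    · have h1 : x 1 ≠ 0 := by
        intro h1
        apply hx
        ext i
        fin_cases i <;> simp [h0, h1]
      exact neg_injective (mul_right_cancel₀ (pow_ne_zero 2 h1) h10)
    · exact mul_right_cancel₀ (pow_ne_zero 2 h0) h01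
  have := Set.ncard_image_of_injective Set.univ hf
  rw [Set.ncard_univ, Nat.card_eq_fintype_card] at this
  rw [← this]
  apply Set.ncard_le_ncard _ (Set.toFinite _)
  rintro _ ⟨t, -, rfl⟩
  ext i
  fin_cases i <;> simp [f, Matrix.mulVec, dotProduct, Fin.sum_univ_two] <;> ring


/-- **EKR property for SL(2,q).**  If `S` is an intersecting subset of `SL(2,F)` for the
natural action on the nonzero vectors of `F²`, then `|S| ≤ q`; moreover the stabilizer of
any nonzero vector is an intersecting set of size exactly `q`. -/
theorem sl2_ekr (q : ℕ) (hq : IsPrimePow q) (F : Type*) [Field F] [Fintype F]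
    (hF : Fintype.card F = q) :
    (∀ S : Set (Matrix.SpecialLinearGroup (Fin 2) F),
      (∀ g ∈ S, ∀ h ∈ S, ∃ v : Fin 2 → F, v ≠ 0 ∧
        (g : Matrix (Fin 2) (Fin 2) F).mulVec v = (h : Matrix (Fin 2) (Fin 2) F).mulVec v) →
      S.ncard ≤ q) ∧
    (∀ x : Fin 2 → F, x ≠ 0 →
      (∀ g ∈ {g : Matrix.SpecialLinearGroup (Fin 2) F |
                (g : Matrix (Fin 2) (Fin 2) F).mulVec x = x},
        ∀ h ∈ {g : Matrix.SpecialLinearGroup (Fin 2) F |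
                (g : Matrix (Fin 2) (Fin 2) F).mulVec x = x},
          ∃ v : Fin 2 → F, v ≠ 0 ∧
            (g : Matrix (Fin 2) (Fin 2) F).mulVec v = (h : Matrix (Fin 2) (Fin 2) F).mulVec v) ∧
      {g : Matrix.SpecialLinearGroup (Fin 2) F |
        (g : Matrix (Fin 2) (Fin 2) F).mulVec x = x}.ncard = q) := by

  subst hF
  refine ⟨fun S hS => bound_all S hS, fun x hx => ?_⟩
  refine (and_iff_left_of_imp fun H => le_antisymm (bound_all _ H) (stab_lower x hx)).mpr ?_
  intro g hg h hh
  exact ⟨x, hx, Eq.trans hg (Eq.symm hh)⟩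
end

section
/- Let q be a prime power and F a finite field with q elements. There exists a subgroup H of GL(2,F) with |H| = q² − 1 such that every non-identity element of H fixes no nonzero vector of F², i.e., for every h ∈ H with h ≠ 1 and every nonzero v ∈ F², h v ≠ v. (Such an H is a Singer subgroup, and its elements form a clique of size q² − 1 in the derangement graph of GL(2,F).) -/
/-- **Singer subgroup of GL(2,q).**  There is a subgroup `H ≤ GL(2,F)` of order `q² - 1`
all of whose non-identity elements are derangements for the natural action on the nonzero
vectors of `F²`. -/
theorem gl2_singer_subgroup (q : ℕ) (hq : IsPrimePow q) (F : Type*) [Field F] [Fintype F]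
    (hF : Fintype.card F = q) :
    ∃ H : Subgroup (GL (Fin 2) F), Nat.card H = q ^ 2 - 1 ∧
      ∀ h ∈ H, h ≠ 1 → ∀ v : Fin 2 → F, v ≠ 0 →
        (h : Matrix (Fin 2) (Fin 2) F).mulVec v ≠ v := by
  obtain ⟨p, hp⟩ := CharP.exists F
  have hpp : Fact p.Prime := ⟨CharP.char_is_prime F p⟩
  let K := FiniteField.Extension F p 2
  have hfr : Module.finrank F K = 2 := FiniteField.finrank_extension F p 2
  have : Module.Finite F K := Module.finite_of_finrank_pos (by omega)
  let b : Module.Basis (Fin 2) F K := Module.finBasisOfFinrankEq F K hfr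
  let f : Kˣ →* GL (Fin 2) F := Units.map (Algebra.leftMulMatrix b).toRingHom.toMonoidHom
  have hf : Function.Injective f := Units.map_injective (Algebra.leftMulMatrix_injective b)
  have hK : Nat.card K = q ^ 2 := by
    rw [Module.natCard_eq_pow_finrank (K := F), hfr, Nat.card_eq_fintype_card, hF]
  refine ⟨f.range, ?_, ?_⟩
  · rw [← Nat.card_congr (MonoidHom.ofInjective hf).toEquiv, Nat.card_units, hK]
  · rintro _ ⟨x, rfl⟩ hx v hv he
    apply hx
    have hv' : b.equivFun.symm v ≠ 0 := (LinearEquiv.map_ne_zero_iff _).2 hv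
    have h1 := Algebra.leftMulMatrix_mulVec_repr b (x : K) (b.equivFun.symm v)
    have h2 : (b.repr (b.equivFun.symm v) : Fin 2 → F) = v := b.equivFun.apply_symm_apply v
    rw [h2] at h1
    have h3 : b.equivFun (x * b.equivFun.symm v) = v := h1.symm.trans he
    have h4 : (x : K) * b.equivFun.symm v = b.equivFun.symm v :=
      (LinearEquiv.eq_symm_apply _).2 h3
    have h5 : (x : K) = 1 := mul_right_cancel₀ hv' (by rw [h4, one_mul])
    rw [Units.val_eq_one.1 h5, map_one]
end

section
/- Let q be a prime power with q ≥ 3, F a finite field with q elements, and ℓ a one-dimensional linear subspace of F². Define H_ℓ = {M ∈ GL(2,F) : for all v ∈ F², M v − v ∈ ℓ}. Then H_ℓ is a subgroup of GL(2,F) of order q(q−1); H_ℓ is an intersecting set (any two of its elements agree on some nonzero vector of F²); and H_ℓ is not a canonical intersecting set, i.e., there are no nonzero x, y ∈ F² with H_ℓ = {g ∈ GL(2,F) : g x = y}. In particular GL(2,F) does not have the strict-EKR property. -/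
/-- Every nonzero vector of a plane pairs to one with some covector. -/
lemma exists_dual_vec {F : Type*} [Field F] (w : Fin 2 → F) (hw : w ≠ 0) :
    ∃ u0 u1 : F, u0 * w 0 + u1 * w 1 = 1 := by
  by_cases h0 : w 0 = 0
  · have h1 : w 1 ≠ 0 := by
      intro h1
      apply hw
      ext i
      fin_cases i <;> simp [h0, h1]
    exact ⟨0, (w 1)⁻¹, by simp [h1]⟩
  · exact ⟨(w 0)⁻¹, 0, by simp [h0]⟩

/-- Parametrisation of the group `H_ℓ`. -/
lemma param_H {F : Type*} [Field F] (ℓ : Submodule F (Fin 2 → F)) (w : Fin 2 → F)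
    (hwℓ : ∀ v, v ∈ ℓ ↔ ∃ c : F, c • w = v) (u0 u1 : F) (hu : u0 * w 0 + u1 * w 1 = 1) :
    ∃ f : Fˣ × F → GL (Fin 2) F, Function.Injective f ∧
      (∀ p : Fˣ × F, ∀ v : Fin 2 → F, (f p : Matrix (Fin 2) (Fin 2) F).mulVec v =
        v + ((((p.1 : F) - 1) * u0 - p.2 * w 1) * v 0 +
          (((p.1 : F) - 1) * u1 + p.2 * w 0) * v 1) • w) ∧
      Set.range f = {M : GL (Fin 2) F | ∀ v : Fin 2 → F,
        (M : Matrix (Fin 2) (Fin 2) F).mulVec v - v ∈ ℓ} := by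
  let A : Fˣ × F → Matrix (Fin 2) (Fin 2) F := fun p =>
    !![1 + w 0 * (((p.1 : F) - 1) * u0 - p.2 * w 1), w 0 * (((p.1 : F) - 1) * u1 + p.2 * w 0);
       w 1 * (((p.1 : F) - 1) * u0 - p.2 * w 1), 1 + w 1 * (((p.1 : F) - 1) * u1 + p.2 * w 0)]
  have hdet : ∀ p, (A p).det = p.1 := by
    intro p
    simp only [A, Matrix.det_fin_two_of]
    linear_combination ((p.1 : F) - 1) * hu
  let f : Fˣ × F → GL (Fin 2) F := fun p =>
    Matrix.GeneralLinearGroup.mkOfDetNeZero (A p) (by rw [hdet]; exact p.1.ne_zero)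
  have hf : ∀ p, (f p : Matrix (Fin 2) (Fin 2) F) = A p := fun p => rfl
  have hmul : ∀ p : Fˣ × F, ∀ v : Fin 2 → F, (f p : Matrix (Fin 2) (Fin 2) F).mulVec v =
        v + ((((p.1 : F) - 1) * u0 - p.2 * w 1) * v 0 +
          (((p.1 : F) - 1) * u1 + p.2 * w 0) * v 1) • w := by
    intro p v
    rw [hf]
    ext i
    fin_cases i <;> simp [A, Matrix.mulVec, dotProduct, Fin.sum_univ_two] <;> ring
  refine ⟨f, ?_, hmul, ?_⟩
  · intro p p' h
    have hA : A p = A p' := by rw [← hf, ← hf, h]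
    have h1 : (p.1 : F) = p'.1 := by rw [← hdet, ← hdet, hA]
    have e00 := congrFun (congrFun hA 0) 0
    have e01 := congrFun (congrFun hA 0) 1
    have e10 := congrFun (congrFun hA 1) 0
    have e11 := congrFun (congrFun hA 1) 1
    simp only [A, Matrix.of_apply, Matrix.cons_val', Matrix.cons_val_zero, Matrix.cons_val_one,
      Matrix.cons_val_fin_one, h1] at e00 e01 e10 e11
    refine Prod.ext (Units.ext h1) ?_
    have k0 : (p.2 - p'.2) * w 1 = 0 := by
      linear_combination (-u0) * e00 - u1 * e10 - (p.2 - p'.2) * w 1 * hu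
    have k1 : (p.2 - p'.2) * w 0 = 0 := by
      linear_combination u0 * e01 + u1 * e11 - (p.2 - p'.2) * w 0 * hu
    linear_combination u0 * k1 + u1 * k0 - (p.2 - p'.2) * hu
  · ext M
    constructor
    · rintro ⟨p, rfl⟩ v
      rw [hmul, hwℓ]
      exact ⟨_, (add_sub_cancel_left _ _).symm⟩
    · intro hM
      obtain ⟨a, ha⟩ := (hwℓ _).1 (hM ![1, 0])
      obtain ⟨b, hb⟩ := (hwℓ _).1 (hM ![0, 1])
      have a0 := congrFun ha 0
      have a1 := congrFun ha 1
      have b0 := congrFun hb 0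
      have b1 := congrFun hb 1
      simp [Matrix.mulVec, dotProduct, Fin.sum_univ_two] at a0 a1 b0 b1
      have hd : M.1.det ≠ 0 := (Matrix.isUnit_iff_isUnit_det _ |>.1 M.isUnit).ne_zero
      have hs : M.1.det = 1 + a * w 0 + b * w 1 := by
        rw [Matrix.det_fin_two, ← b0, ← a1, eq_sub_iff_add_eq.1 a0 |>.symm,
          eq_sub_iff_add_eq.1 b1 |>.symm]
        ring
      refine ⟨(Units.mk0 _ hd, b * u0 - a * u1), ?_⟩
      apply Units.ext
      rw [hf]
      ext i j
      fin_cases i <;> fin_cases j <;> simp [A, hs]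
      · linear_combination a0 + w 0 * a * hu
      · linear_combination b0 + w 0 * b * hu
      · linear_combination a1 + w 1 * a * hu
      · linear_combination b1 + w 1 * b * hu


/-- **GL(2,q) does not have the strict-EKR property.**  For a line `ℓ ≤ F²`, the set
`H_ℓ = {M ∈ GL(2,F) : ∀ v, Mv - v ∈ ℓ}` is a subgroup of order `q(q-1)`, it is an
intersecting set, and it is not a canonical intersecting set. -/
theorem gl2_not_strict_ekr (q : ℕ) (hq : IsPrimePow q) (hq3 : 3 ≤ q)
    (F : Type*) [Field F] [Fintype F] (hF : Fintype.card F = q)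
    (ℓ : Submodule F (Fin 2 → F)) (hℓ : Module.finrank F ℓ = 1) :
    (∃ H : Subgroup (GL (Fin 2) F), (H : Set (GL (Fin 2) F)) =
      {M : GL (Fin 2) F | ∀ v : Fin 2 → F,
        (M : Matrix (Fin 2) (Fin 2) F).mulVec v - v ∈ ℓ}) ∧
    {M : GL (Fin 2) F | ∀ v : Fin 2 → F,
      (M : Matrix (Fin 2) (Fin 2) F).mulVec v - v ∈ ℓ}.ncard = q * (q - 1) ∧
    (∀ g ∈ {M : GL (Fin 2) F | ∀ v : Fin 2 → F,
        (M : Matrix (Fin 2) (Fin 2) F).mulVec v - v ∈ ℓ},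
      ∀ h ∈ {M : GL (Fin 2) F | ∀ v : Fin 2 → F,
        (M : Matrix (Fin 2) (Fin 2) F).mulVec v - v ∈ ℓ},
        ∃ v : Fin 2 → F, v ≠ 0 ∧
          (g : Matrix (Fin 2) (Fin 2) F).mulVec v = (h : Matrix (Fin 2) (Fin 2) F).mulVec v) ∧
    ¬ ∃ x y : Fin 2 → F, x ≠ 0 ∧ y ≠ 0 ∧
      {M : GL (Fin 2) F | ∀ v : Fin 2 → F,
        (M : Matrix (Fin 2) (Fin 2) F).mulVec v - v ∈ ℓ} =
      {g : GL (Fin 2) F | (g : Matrix (Fin 2) (Fin 2) F).mulVec x = y} := by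
  classical
  obtain ⟨w', hw0', hw'⟩ := finrank_eq_one_iff'.1 hℓ
  obtain ⟨w, hwm⟩ := w'
  have hw0 : w ≠ 0 := fun h => hw0' (Subtype.ext h)
  have hwℓ : ∀ v, v ∈ ℓ ↔ ∃ c : F, c • w = v := by
    intro v
    constructor
    · intro hv
      obtain ⟨c, hc⟩ := hw' ⟨v, hv⟩
      exact ⟨c, congrArg Subtype.val hc⟩
    · rintro ⟨c, rfl⟩
      exact ℓ.smul_mem c hwm
  obtain ⟨u0, u1, hu⟩ := exists_dual_vec w hw0
  obtain ⟨f, hinj, hmul, hrange⟩ := param_H ℓ w hwℓ u0 u1 hu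
  refine ⟨⟨⟨⟨⟨_, ?_⟩, ?_⟩, ?_⟩, rfl⟩, ?_, ?_, ?_⟩
  · intro a b ha hb v
    have h := ℓ.add_mem (ha ((b : Matrix (Fin 2) (Fin 2) F).mulVec v)) (hb v)
    rw [sub_add_sub_cancel, Matrix.mulVec_mulVec] at h
    exact h
  · intro v
    simp
  · intro a ha v
    have h := ℓ.neg_mem (ha (((a⁻¹ : GL (Fin 2) F) : Matrix (Fin 2) (Fin 2) F).mulVec v))
    rw [Matrix.mulVec_mulVec, ← Units.val_mul, mul_inv_cancel, Units.val_one, Matrix.one_mulVec,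
      neg_sub] at h
    exact h
  · rw [← hrange, ← Set.image_univ, Set.ncard_image_of_injective _ hinj, Set.ncard_univ,
      Nat.card_prod, Nat.card_units, Nat.card_eq_fintype_card, hF, mul_comm]
  · rw [← hrange]
    rintro _ ⟨p, rfl⟩ _ ⟨p', rfl⟩
    obtain ⟨c0, hc0⟩ : ∃ c, c = (((p.1 : F) - 1) * u0 - p.2 * w 1) -
      (((p'.1 : F) - 1) * u0 - p'.2 * w 1) := ⟨_, rfl⟩
    obtain ⟨c1, hc1⟩ : ∃ c, c = (((p.1 : F) - 1) * u1 + p.2 * w 0) -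
      (((p'.1 : F) - 1) * u1 + p'.2 * w 0) := ⟨_, rfl⟩
    have key : ∃ v : Fin 2 → F, v ≠ 0 ∧ c0 * v 0 + c1 * v 1 = 0 := by
      by_cases h : c1 = 0
      · by_cases h' : c0 = 0
        · exact ⟨w, hw0, by simp [h, h']⟩
        · exact ⟨![-c1, c0], fun hh => h' (by simpa using congrFun hh 1), by simp; ring⟩
      · exact ⟨![-c1, c0], fun hh => h (by simpa using congrFun hh 0), by simp; ring⟩
    obtain ⟨v, hv, hcv⟩ := key
    refine ⟨v, hv, ?_⟩
    rw [hmul, hmul]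
    congr 2
    rw [hc0, hc1] at hcv
    linear_combination hcv
  · rintro ⟨x, y, hx, hy, hS⟩
    rw [← hrange] at hS
    have hfix : ∀ p : Fˣ × F, ((((p.1 : F) - 1) * u0 - p.2 * w 1) * x 0 +
          (((p.1 : F) - 1) * u1 + p.2 * w 0) * x 1) = 0 := by
      intro p
      have h1 : f (1, 0) ∈ Set.range f := ⟨_, rfl⟩
      have h2 : f p ∈ Set.range f := ⟨_, rfl⟩
      rw [hS, Set.mem_setOf_eq, hmul] at h1 h2
      simp at h1
      rw [← h1] at h2
      have h3 := add_eq_left.1 h2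
      exact (smul_eq_zero.1 h3).resolve_right hw0
    have hs : ∃ s : Fˣ, s ≠ 1 := by
      have : 1 < Fintype.card Fˣ := by
        rw [Fintype.card_units, hF]
        omega
      exact Fintype.exists_ne_of_one_lt_card this 1
    obtain ⟨s, hs⟩ := hs
    have hs' : (s : F) - 1 ≠ 0 := by
      rw [sub_ne_zero]
      exact fun h => hs (Units.ext h)
    have e1 := hfix (1, 1)
    have e2 := hfix (s, 0)
    simp at e1 e2
    have e3 : u0 * x 0 + u1 * x 1 = 0 := by
      apply (mul_eq_zero.1 (_ : ((s : F) - 1) * (u0 * x 0 + u1 * x 1) = 0)).resolve_left hs'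
      linear_combination e2
    apply hx
    ext i
    fin_cases i
    · simp
      linear_combination w 0 * e3 - u1 * e1 - x 0 * hu
    · simp
      linear_combination w 1 * e3 + u0 * e1 - x 1 * hu
end

section
/- Let q be a prime power and F a finite field with q elements. The number of derangements in GL(2,F) for its natural action on the nonzero vectors of F², i.e., the number of M ∈ GL(2,F) such that M v ≠ v for every nonzero v ∈ F², equals q⁴ − 2q³ − q² + 3q = q(q³ − 2q² − q + 3). -/
open Classical in
/-- number of pairs with product `t` -/
theorem gl2_aux_N {F : Type*} [Field F] [Fintype F] (t : F) :
    (∑ b : F, ∑ c : F, if b * c = t then (1 : ℤ) else 0) =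
      (Fintype.card F : ℤ) - 1 + (Fintype.card F : ℤ) * (if t = 0 then 1 else 0) := by
  have h : ∀ b : F, (∑ c : F, if b * c = t then (1 : ℤ) else 0) =
      1 + if b = 0 then ((Fintype.card F : ℤ) * (if t = 0 then 1 else 0) - 1) else 0 := by
    intro b
    by_cases hb : b = 0
    · subst hb
      by_cases ht : t = 0
      · simp [ht]
      · simp [ht, Ne.symm ht]
    · have : ∀ c : F, (b * c = t) ↔ c = b⁻¹ * t := by
        intro c
        rw [eq_inv_mul_iff_mul_eq₀ hb]
      simp [this, hb]
  simp only [h, Finset.sum_add_distrib]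
  simp
  ring

open Classical in
theorem gl2_aux_S {F : Type*} [Field F] [Fintype F] :
    (∑ a : F, ∑ d : F, ∑ b : F, ∑ c : F, if b * c = a * d then (1 : ℤ) else 0) =
      (Fintype.card F : ℤ) ^ 3 + (Fintype.card F : ℤ) ^ 2 - (Fintype.card F : ℤ) := by
  simp only [gl2_aux_N, Finset.sum_add_distrib, ← Finset.mul_sum]
  simp
  ring

open Classical in
theorem gl2_aux_B {F : Type*} [Field F] [Fintype F] :
    (∑ a : F, ∑ d : F, ∑ b : F, ∑ c : F,
      if d = 1 - a then (if b * c = a * d then (1 : ℤ) else 0) else 0) =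
      (Fintype.card F : ℤ) ^ 2 + (Fintype.card F : ℤ) := by
  have h : ∀ a : F, (∑ d : F, ∑ b : F, ∑ c : F,
      if d = 1 - a then (if b * c = a * d then (1 : ℤ) else 0) else 0) =
      ((Fintype.card F : ℤ) - 1) + (Fintype.card F : ℤ) *
        ((if a = 0 then 1 else 0) + (if a = 1 then 1 else 0)) := by
    intro a
    rw [Finset.sum_eq_single (1 - a)]
    · simp only [if_true, gl2_aux_N]
      by_cases h0 : a = 0
      · simp [h0]
      · by_cases h1 : a = 1
        · simp [h1]
        · simp [h0, h1, sub_eq_zero, Ne.symm h1]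
    · intro d _ hd
      simp [hd]
    · simp
  simp only [h, Finset.sum_add_distrib, ← Finset.mul_sum]
  simp
  ring

theorem gl2_aux_derang {F : Type*} [Field F] (M : Matrix (Fin 2) (Fin 2) F) :
    (∀ v : Fin 2 → F, v ≠ 0 → M.mulVec v ≠ v) ↔
      M 0 1 * M 1 0 ≠ (M 0 0 - 1) * (M 1 1 - 1) := by
  have h := Matrix.exists_mulVec_eq_zero_iff (M := M - 1)
  rw [Matrix.det_fin_two] at h
  simp only [Matrix.sub_mulVec, Matrix.one_mulVec, sub_eq_zero] at h
  rw [← not_iff_not]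
  push Not
  simp only [Matrix.sub_apply] at h
  rw [h, Matrix.one_apply_eq, Matrix.one_apply_eq, Matrix.one_apply_ne (by decide),
    Matrix.one_apply_ne (by decide), sub_zero, sub_zero]
  exact eq_comm

open Classical in
/-- The count as a sum over matrix entries. -/
theorem gl2_aux_count {F : Type*} [Field F] [Fintype F] :
    ({M : GL (Fin 2) F | ∀ v : Fin 2 → F, v ≠ 0 →
        (M : Matrix (Fin 2) (Fin 2) F).mulVec v ≠ v}.ncard : ℤ) =
      ∑ a : F, ∑ d : F, ∑ b : F, ∑ c : F,
        if b * c ≠ a * d ∧ b * c ≠ (a - 1) * (d - 1) then (1 : ℤ) else 0 := by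
  let f : GL (Fin 2) F → F × F × F × F := fun M => (M 0 0, M 1 1, M 0 1, M 1 0)
  have hf : Function.Injective f := by
    intro M N h
    simp only [f, Prod.mk.injEq] at h
    ext i j
    fin_cases i <;> fin_cases j <;> simp [h]
  rw [← Set.ncard_image_of_injective _ hf]
  have : Set.image f {M : GL (Fin 2) F | ∀ v : Fin 2 → F, v ≠ 0 →
        (M : Matrix (Fin 2) (Fin 2) F).mulVec v ≠ v} =
      ((Finset.univ.filter fun x : F × F × F × F =>
        x.2.2.1 * x.2.2.2 ≠ x.1 * x.2.1 ∧
        x.2.2.1 * x.2.2.2 ≠ (x.1 - 1) * (x.2.1 - 1) : Finset (F × F × F × F)) :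
          Set (F × F × F × F)) := by
    ext ⟨a, d, b, c⟩
    simp only [gl2_aux_derang, Set.mem_image, Set.mem_ofPred_eq, Finset.coe_filter,
      Finset.mem_univ, true_and, f, Prod.mk.injEq]
    constructor
    · rintro ⟨M, hM, rfl, rfl, rfl, rfl⟩
      refine ⟨fun h => ?_, hM⟩
      have := M.det_ne_zero
      rw [Matrix.det_fin_two] at this
      exact this (sub_eq_zero.2 h.symm)
    · rintro ⟨h1, h2⟩
      refine ⟨Matrix.GeneralLinearGroup.mkOfDetNeZero !![a, b; c, d] ?_, ?_, ?_⟩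
      · rw [Matrix.det_fin_two_of, sub_ne_zero]
        exact h1.symm
      · simpa [Matrix.GeneralLinearGroup.mkOfDetNeZero] using h2
      · simp [Matrix.GeneralLinearGroup.mkOfDetNeZero]
  rw [this, Set.ncard_coe_finset, Finset.card_filter]
  push_cast
  simp only [Fintype.sum_prod_type]

/-- **Number of derangements of GL(2,q).**  The number of elements of `GL(2,F)` fixing
no nonzero vector of `F²` is `q⁴ - 2q³ - q² + 3q`. -/
theorem gl2_derangement_count (q : ℕ) (hq : IsPrimePow q) (F : Type*) [Field F] [Fintype F]
    (hF : Fintype.card F = q) :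
    ({M : GL (Fin 2) F | ∀ v : Fin 2 → F, v ≠ 0 →
        (M : Matrix (Fin 2) (Fin 2) F).mulVec v ≠ v}.ncard : ℤ) =
      (q : ℤ) ^ 4 - 2 * (q : ℤ) ^ 3 - (q : ℤ) ^ 2 + 3 * (q : ℤ) := by
  classical
  subst hF
  rw [gl2_aux_count]
  have key : ∀ a d b c : F,
      (if b * c ≠ a * d ∧ b * c ≠ (a - 1) * (d - 1) then (1 : ℤ) else 0) =
      1 - (if b * c = a * d then (1 : ℤ) else 0)
        - (if b * c = (a - 1) * (d - 1) then (1 : ℤ) else 0)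
        + (if d = 1 - a then (if b * c = a * d then (1 : ℤ) else 0) else 0) := by
    intro a d b c
    by_cases h1 : b * c = a * d
    · have : d = 1 - a ↔ b * c = (a - 1) * (d - 1) := by
        rw [h1]
        constructor
        · intro h
          rw [h]
          ring
        · intro h
          linear_combination h
      by_cases h2 : b * c = (a - 1) * (d - 1)
      · rw [if_pos (this.2 h2), if_pos h1, if_pos h2, if_neg (fun h => h.1 h1)]
        norm_num
      · rw [if_neg (fun h => h2 (this.1 h)), if_pos h1, if_neg h2, if_neg (fun h => h.1 h1)]
        norm_num
    · by_cases h2 : b * c = (a - 1) * (d - 1)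
      · rw [if_neg h1, if_pos h2, if_neg (fun h => h.2 h2)]
        simp
      · rw [if_neg h1, if_neg h2, if_pos ⟨h1, h2⟩]
        simp
  have hT : (∑ a : F, ∑ d : F, ∑ b : F, ∑ c : F,
      if b * c = (a - 1) * (d - 1) then (1 : ℤ) else 0) =
      ∑ a : F, ∑ d : F, ∑ b : F, ∑ c : F, if b * c = a * d then (1 : ℤ) else 0 := by
    rw [← Equiv.sum_comp (Equiv.subRight (1 : F))
      (fun a => ∑ d : F, ∑ b : F, ∑ c : F, if b * c = a * d then (1 : ℤ) else 0)]
    refine Finset.sum_congr rfl fun a _ => ?_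
    rw [← Equiv.sum_comp (Equiv.subRight (1 : F))
      (fun d => ∑ b : F, ∑ c : F, if b * c = Equiv.subRight (1 : F) a * d then (1 : ℤ) else 0)]
    rfl
  simp only [key, Finset.sum_add_distrib, Finset.sum_sub_distrib]
  rw [hT, gl2_aux_S, gl2_aux_B]
  simp
  ring
end

section
/- Let q be a prime power and F a finite field with q elements. For nonzero x, y ∈ F², let v_{x,y} : GL(2,F) → ℂ be the function with v_{x,y}(g) = 1 if g x = y and v_{x,y}(g) = 0 otherwise. If S ⊆ GL(2,F) is an intersecting set of maximum size |S| = q(q−1), then the indicator function of S lies in the ℂ-linear span of the vectors {v_{x,y} : x, y ∈ F² \ {0}}. (GL(2,F) has the EKR-module property.) -/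
section GL2Helpers

open Matrix

/-- A singular two by two matrix is an outer product. -/
lemma gl2h_rank_one {F : Type*} [Field F] (D : Matrix (Fin 2) (Fin 2) F) (h : D.det = 0) :
    ∃ a b c d : F, D 0 0 = a * c ∧ D 0 1 = a * d ∧ D 1 0 = b * c ∧ D 1 1 = b * d := by
  rw [det_fin_two] at h
  by_cases h0 : D 0 0 = 0
  · by_cases h1 : D 0 1 = 0
    · exact ⟨0, 1, D 1 0, D 1 1, by simp [h0], by simp [h1], by simp, by simp⟩
    · refine ⟨1, D 1 1 / D 0 1, 0, D 0 1, by simp [h0], by simp, ?_, ?_⟩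
      · have : D 0 1 * D 1 0 = 0 := by linear_combination (D 1 1) * h0 - h
        simpa [h1] using this
      · field_simp
  · refine ⟨1, D 1 0 / D 0 0, D 0 0, D 0 1, by simp, by simp, ?_, ?_⟩
    · field_simp
    · field_simp
      linear_combination h

lemma gl2h_par {F : Type*} [Field F] {a b c d e f : F} (h : c ≠ 0 ∨ d ≠ 0)
    (h1 : a * d = b * c) (h2 : c * f = d * e) : a * f = b * e := by
  rcases h with h | h
  · apply mul_left_cancel₀ h
    linear_combination a * h2 + e * h1
  · apply mul_left_cancel₀ h
    linear_combination f * h1 + b * h2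

/-- Cliques of the bilinear forms graph. -/
lemma gl2h_clique {F : Type*} [Field F] (T : Set (Matrix (Fin 2) (Fin 2) F))
    (A : Matrix (Fin 2) (Fin 2) F) (hA : A ∈ T)
    (hT : ∀ g ∈ T, ∀ h ∈ T, (g - h).det = 0) :
    (∃ x : Fin 2 → F, x ≠ 0 ∧ ∀ g ∈ T, g *ᵥ x = A *ᵥ x) ∨
    (∃ x : Fin 2 → F, x ≠ 0 ∧ ∀ g ∈ T, gᵀ *ᵥ x = Aᵀ *ᵥ x) := by
  by_cases hall : ∀ g ∈ T, g = A
  · left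
    refine ⟨![1, 0], by simp, fun g hg => by rw [hall g hg]⟩
  push Not at hall
  obtain ⟨B, hB, hBA⟩ := hall
  obtain ⟨a, b, c, d, h00, h01, h10, h11⟩ := gl2h_rank_one (B - A) (hT B hB A hA)
  simp only [Matrix.sub_apply] at h00 h01 h10 h11
  have hab : a ≠ 0 ∨ b ≠ 0 := by
    by_contra hc
    push Not at hc
    apply hBA
    ext i j
    rw [← sub_eq_zero]
    fin_cases i <;> fin_cases j <;> simp [h00, h01, h10, h11, hc.1, hc.2]
  have hcd : c ≠ 0 ∨ d ≠ 0 := by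
    by_contra hc
    push Not at hc
    apply hBA
    ext i j
    rw [← sub_eq_zero]
    fin_cases i <;> fin_cases j <;> simp [h00, h01, h10, h11, hc.1, hc.2]
  by_contra hcon
  push Not at hcon
  obtain ⟨hc1, hc2⟩ := hcon
  obtain ⟨C, hC, hCA⟩ := hc1 ![-d, c] (by
    intro h
    have e0 := congrFun h 0
    have e1 := congrFun h 1
    simp at e0 e1
    tauto)
  obtain ⟨D, hD, hDA⟩ := hc2 ![-b, a] (by
    intro h
    have e0 := congrFun h 0
    have e1 := congrFun h 1
    simp at e0 e1
    tauto)
  obtain ⟨a2, b2, c2, d2, k00, k01, k10, k11⟩ := gl2h_rank_one (C - A) (hT C hC A hA)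
  obtain ⟨a3, b3, c3, d3, l00, l01, l10, l11⟩ := gl2h_rank_one (D - A) (hT D hD A hA)
  have p12 := hT B hB C hC
  have p13 := hT B hB D hD
  have p23 := hT C hC D hD
  simp only [Matrix.sub_apply] at k00 k01 k10 k11 l00 l01 l10 l11
  rw [sub_eq_iff_eq_add] at h00 h01 h10 h11 k00 k01 k10 k11 l00 l01 l10 l11
  simp only [det_fin_two, Matrix.sub_apply, h00, h01, h10, h11, k00, k01, k10, k11,
    l00, l01, l10, l11] at p12 p13 p23
  have q12 : (a * b2 - b * a2) * (c * d2 - d * c2) = 0 := by linear_combination -p12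
  have q13 : (a * b3 - b * a3) * (c * d3 - d * c3) = 0 := by linear_combination -p13
  have q23 : (a2 * b3 - b2 * a3) * (c2 * d3 - d2 * c3) = 0 := by linear_combination -p23
  have hw2 : c * d2 - d * c2 ≠ 0 := by
    intro h
    apply hCA
    ext i
    fin_cases i <;> simp [mulVec, dotProduct, Fin.sum_univ_two, k00, k01, k10, k11]
    · linear_combination a2 * h
    · linear_combination b2 * h
  have hu2 : a2 ≠ 0 ∨ b2 ≠ 0 := by
    by_contra hc
    push Not at hc
    apply hCA
    ext i
    fin_cases i <;> simp [mulVec, dotProduct, Fin.sum_univ_two, k00, k01, k10, k11, hc.1, hc.2]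
  have hu3 : a * b3 - b * a3 ≠ 0 := by
    intro h
    apply hDA
    ext i
    fin_cases i <;> simp [mulVec, dotProduct, Fin.sum_univ_two, l00, l01, l10, l11]
    · linear_combination c3 * h
    · linear_combination d3 * h
  have hw3 : c3 ≠ 0 ∨ d3 ≠ 0 := by
    by_contra hc
    push Not at hc
    apply hDA
    ext i
    fin_cases i <;> simp [mulVec, dotProduct, Fin.sum_univ_two, l00, l01, l10, l11, hc.1, hc.2]
  have r12 : a * b2 - b * a2 = 0 := (mul_eq_zero.1 q12).resolve_right hw2
  have r13 : c * d3 - d * c3 = 0 := (mul_eq_zero.1 q13).resolve_left hu3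
  rcases mul_eq_zero.1 q23 with r | r
  · exact hu3 (sub_eq_zero.2 (gl2h_par hu2 (sub_eq_zero.1 r12) (sub_eq_zero.1 r)))
  · exact hw2 (sub_eq_zero.2 (gl2h_par hw3 (sub_eq_zero.1 r13) (by linear_combination -r)))

/-- Upper bound for the size of a coset of a point stabiliser. -/
lemma gl2h_card {F : Type*} [Field F] [Fintype F] (x y : Fin 2 → F) (hx : x ≠ 0) :
    {A : Matrix (Fin 2) (Fin 2) F | A.det ≠ 0 ∧ A *ᵥ x = y}.ncard
      ≤ Fintype.card F * (Fintype.card F - 1) := by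
  classical
  by_cases hy : y = 0
  · have : {A : Matrix (Fin 2) (Fin 2) F | A.det ≠ 0 ∧ A *ᵥ x = y} = ∅ := by
      ext A
      simp only [Set.mem_ofPred_eq, Set.mem_empty_iff_false, iff_false, not_and]
      intro hA h
      exact hx (Matrix.eq_zero_of_mulVec_eq_zero hA (h.trans hy))
    rw [this]; simp
  obtain ⟨e, he⟩ : ∃ e : Fin 2 → F, x 0 * e 1 - x 1 * e 0 ≠ 0 := by
    by_cases h0 : x 0 = 0
    · refine ⟨![1, 0], ?_⟩
      simp only [cons_val_zero, cons_val_one]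
      intro h
      apply hx
      ext i
      fin_cases i
      · simpa using h0
      · simpa using h
    · exact ⟨![0, 1], by simpa using h0⟩
  have hinj : Function.Injective (fun t : F => t • y) := smul_left_injective F hy
  have hc : (Finset.univ \ Finset.univ.image (fun t : F => t • y)).card
      = Fintype.card F * (Fintype.card F - 1) := by
    rw [Finset.card_sdiff_of_subset (Finset.subset_univ _),
      Finset.card_image_of_injective _ hinj]
    simp [Nat.mul_sub, sq]
  rw [← hc, ← Set.ncard_coe_finset]
  apply Set.ncard_le_ncard_of_injOn (fun A => A *ᵥ e)
  · rintro A ⟨hA, hAx⟩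
    simp only [Finset.coe_sdiff, Finset.coe_univ, Finset.coe_image, Set.image_univ, Set.mem_sdiff,
      Set.mem_univ, true_and, Set.mem_range, not_exists]
    intro t ht
    have h1 : A *ᵥ (t • x - e) = 0 := by
      rw [mulVec_sub, mulVec_smul, hAx, ht, sub_self]
    have h2 := Matrix.eq_zero_of_mulVec_eq_zero hA h1
    have e0 := congrFun h2 0
    have e1 := congrFun h2 1
    simp only [Pi.sub_apply, Pi.smul_apply, smul_eq_mul, Pi.zero_apply] at e0 e1
    apply he
    linear_combination x 1 * e0 - x 0 * e1
  · rintro A ⟨hA, hAx⟩ B ⟨hB, hBx⟩ h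
    have h1 : A *ᵥ x = B *ᵥ x := hAx.trans hBx.symm
    ext i j
    have e0 := congrFun h1 i
    have e1 := congrFun h i
    simp only [mulVec, dotProduct, Fin.sum_univ_two] at e0 e1
    apply mul_left_cancel₀ he
    fin_cases j
    · simp only [Fin.zero_eta]
      linear_combination e 1 * e0 - x 1 * e1
    · simp only [Fin.mk_one]
      linear_combination - e 0 * e0 + x 0 * e1

/-- The number of solutions of a nonzero linear equation. -/
lemma gl2h_ker {F : Type*} [Field F] [Fintype F] [DecidableEq F] (r : Fin 2 → F) (hr : r ≠ 0) :
    (Finset.univ.filter (fun x : Fin 2 → F => r ⬝ᵥ x = 0)).card = Fintype.card F := by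
  classical
  have hy : (![-r 1, r 0] : Fin 2 → F) ≠ 0 := by
    intro h
    have e0 := congrFun h 0
    have e1 := congrFun h 1
    simp at e0 e1
    apply hr
    ext i
    fin_cases i <;> simp [e0, e1]
  have hinj := smul_left_injective F hy
  rw [← Finset.card_univ, ← Finset.card_image_of_injective _ hinj]
  congr 1
  ext x
  simp only [Finset.mem_filter, Finset.mem_univ, true_and, Finset.mem_image, dotProduct,
    Fin.sum_univ_two]
  constructor
  · intro h
    by_cases h0 : r 0 = 0
    · have h1 : r 1 ≠ 0 := by
        intro h1
        apply hr
        ext i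
        fin_cases i <;> simp [h0, h1]
      refine ⟨- x 0 / r 1, ?_⟩
      ext i
      fin_cases i
      · simp; field_simp
      · have : x 1 = 0 := by simpa [h0, h1] using h
        simp [h0, this]
    · refine ⟨x 1 / r 0, ?_⟩
      ext i
      fin_cases i
      · simp; field_simp; linear_combination -h
      · simp; field_simp
  · rintro ⟨t, rfl⟩
    simp; ring

end GL2Helpers

/-- **EKR-module property for GL(2,q).**  The indicator function of any maximum
intersecting set in `GL(2,F)` (of size `q(q-1)`) lies in the complex span of the
characteristic vectors of the canonical intersecting sets. -/
theorem gl2_ekr_module (q : ℕ) (hq : IsPrimePow q) (F : Type*) [Field F] [Fintype F]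
    (hF : Fintype.card F = q) (S : Set (GL (Fin 2) F))
    (hS : ∀ g ∈ S, ∀ h ∈ S, ∃ v : Fin 2 → F, v ≠ 0 ∧
      (g : Matrix (Fin 2) (Fin 2) F).mulVec v = (h : Matrix (Fin 2) (Fin 2) F).mulVec v)
    (hcard : S.ncard = q * (q - 1)) :
    Set.indicator S (fun _ => (1 : ℂ)) ∈
      Submodule.span ℂ {f : GL (Fin 2) F → ℂ | ∃ x y : Fin 2 → F, x ≠ 0 ∧ y ≠ 0 ∧
        f = Set.indicator {g : GL (Fin 2) F | (g : Matrix (Fin 2) (Fin 2) F).mulVec x = y}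
              (fun _ => (1 : ℂ))} := by
  classical
  have hq2 : 2 ≤ q := hq.two_le
  set W := Submodule.span ℂ {f : GL (Fin 2) F → ℂ | ∃ x y : Fin 2 → F, x ≠ 0 ∧ y ≠ 0 ∧
        f = Set.indicator {g : GL (Fin 2) F | (g : Matrix (Fin 2) (Fin 2) F).mulVec x = y}
              (fun _ => (1 : ℂ))} with hW
  have hdet : ∀ g : GL (Fin 2) F, (g : Matrix (Fin 2) (Fin 2) F).det ≠ 0 := fun g =>
    (g.isUnit.map Matrix.detMonoidHom).ne_zero
  have hmem : ∀ x : Fin 2 → F, x ≠ 0 → ∀ φ : (Fin 2 → F) → ℂ,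
      (fun g : GL (Fin 2) F => φ ((g : Matrix (Fin 2) (Fin 2) F).mulVec x)) ∈ W := by
    intro x hx φ
    have : (fun g : GL (Fin 2) F => φ ((g : Matrix (Fin 2) (Fin 2) F).mulVec x)) =
        ∑ y ∈ Finset.univ.filter (fun y : Fin 2 → F => y ≠ 0), φ y •
          Set.indicator {g : GL (Fin 2) F | (g : Matrix (Fin 2) (Fin 2) F).mulVec x = y}
              (fun _ => (1 : ℂ)) := by
      ext g
      have hne : (g : Matrix (Fin 2) (Fin 2) F).mulVec x ≠ 0 := fun h =>
        hx (Matrix.eq_zero_of_mulVec_eq_zero (hdet g) h)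
      generalize hw : (g : Matrix (Fin 2) (Fin 2) F).mulVec x = w at hne
      simp only [Finset.sum_apply, Pi.smul_apply, Set.indicator_apply, Set.mem_ofPred_eq, hw]
      simp [hne]
    rw [this]
    refine Submodule.sum_mem _ fun y hy => Submodule.smul_mem _ _ (Submodule.subset_span ?_)
    exact ⟨x, y, hx, (Finset.mem_filter.1 hy).2, rfl⟩
  have hconst : ∀ c : ℂ, (fun _ : GL (Fin 2) F => c) ∈ W := fun c =>
    hmem ![1, 0] (by simp) (fun _ => c)
  have hmemAll : ∀ x : Fin 2 → F, ∀ φ : (Fin 2 → F) → ℂ,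
      (fun g : GL (Fin 2) F => φ ((g : Matrix (Fin 2) (Fin 2) F).mulVec x)) ∈ W := by
    intro x φ
    by_cases hx : x = 0
    · subst hx
      simpa using hconst (φ 0)
    · exact hmem x hx φ
  have hne : S.Nonempty := by
    apply Set.nonempty_of_ncard_ne_zero
    rw [hcard]
    have : 0 < q - 1 := by omega
    positivity
  obtain ⟨g0, hg0⟩ := hne
  have hcinj : Function.Injective (fun g : GL (Fin 2) F => (g : Matrix (Fin 2) (Fin 2) F)) :=
    fun a b h => Units.ext h
  have key := gl2h_clique (Set.image (fun g : GL (Fin 2) F => (g : Matrix (Fin 2) (Fin 2) F)) S)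
    g0 ⟨g0, hg0, rfl⟩ (by
      rintro _ ⟨g, hg, rfl⟩ _ ⟨h, hh, rfl⟩
      obtain ⟨v, hv, hgv⟩ := hS g hg h hh
      exact Matrix.exists_mulVec_eq_zero_iff.1 ⟨v, hv, by rw [Matrix.sub_mulVec, hgv, sub_self]⟩)
  rcases key with ⟨x, hx, hall⟩ | ⟨x, hx, hall⟩
  · have hST : S = {g : GL (Fin 2) F | (g : Matrix (Fin 2) (Fin 2) F).mulVec x =
        (g0 : Matrix (Fin 2) (Fin 2) F).mulVec x} := by
      apply Set.eq_of_subset_of_ncard_le (fun g hg => hall _ ⟨g, hg, rfl⟩) _ (Set.toFinite _)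
      rw [hcard, ← hF]
      refine le_trans ?_ (gl2h_card x ((g0 : Matrix (Fin 2) (Fin 2) F).mulVec x) hx)
      exact Set.ncard_le_ncard_of_injOn (fun g : GL (Fin 2) F => (g : Matrix (Fin 2) (Fin 2) F))
        (fun g hg => ⟨hdet g, hg⟩) hcinj.injOn (Set.toFinite _)
    rw [hST]
    apply Submodule.subset_span
    exact ⟨x, _, hx, fun h => hx (Matrix.eq_zero_of_mulVec_eq_zero (hdet g0) h), rfl⟩
  · set m := (g0 : Matrix (Fin 2) (Fin 2) F).transpose.mulVec x with hm
    have hST : S = {g : GL (Fin 2) F |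
        (g : Matrix (Fin 2) (Fin 2) F).transpose.mulVec x = m} := by
      apply Set.eq_of_subset_of_ncard_le (fun g hg => hall _ ⟨g, hg, rfl⟩) _ (Set.toFinite _)
      rw [hcard, ← hF]
      refine le_trans ?_ (gl2h_card x m hx)
      exact Set.ncard_le_ncard_of_injOn
        (fun g : GL (Fin 2) F => (g : Matrix (Fin 2) (Fin 2) F).transpose)
        (fun g hg => ⟨by rw [Matrix.det_transpose]; exact hdet g, hg⟩)
        (Matrix.transpose_injective.comp hcinj).injOn (Set.toFinite _)
    have hform : Set.indicator S (fun _ => (1 : ℂ)) = ((q : ℂ) ^ 2 - q)⁻¹ •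
        ((∑ z : Fin 2 → F, (fun g : GL (Fin 2) F =>
          (fun y : Fin 2 → F => if dotProduct x y = dotProduct m z then (1 : ℂ) else 0)
            ((g : Matrix (Fin 2) (Fin 2) F).mulVec z))) - fun _ => (q : ℂ)) := by
      have hq0 : (q : ℂ) ^ 2 - q ≠ 0 := by
        have h1 : (q : ℂ) ≠ 0 := by exact_mod_cast (by omega : q ≠ 0)
        have h2 : (q : ℂ) - 1 ≠ 0 := by
          rw [sub_ne_zero]
          exact_mod_cast (by omega : q ≠ 1)
        have : (q : ℂ) ^ 2 - q = q * (q - 1) := by ring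
        rw [this]
        exact mul_ne_zero h1 h2
      ext g
      have hdot : ∀ z : Fin 2 → F, (dotProduct x ((g : Matrix (Fin 2) (Fin 2) F).mulVec z) =
          dotProduct m z) ↔
          dotProduct ((g : Matrix (Fin 2) (Fin 2) F).transpose.mulVec x - m) z = 0 := by
        intro z
        rw [sub_dotProduct, sub_eq_zero, Matrix.mulVec_transpose, Matrix.dotProduct_mulVec]
      rw [hST]
      simp only [Pi.smul_apply, Pi.sub_apply, Finset.sum_apply, hdot, smul_eq_mul,
        Finset.sum_boole, Set.indicator_apply, Set.mem_ofPred_eq]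
      split_ifs with h
      · simp [h, hF, inv_mul_cancel₀ hq0]
      · rw [gl2h_ker _ (sub_ne_zero.2 h), hF]
        simp
    rw [hform]
    exact Submodule.smul_mem _ _ (Submodule.sub_mem _
      (Submodule.sum_mem _ fun z _ => hmemAll z
        (fun y : Fin 2 → F => if dotProduct x y = dotProduct m z then (1 : ℂ) else 0)) (hconst _))
end

section
/- Let q be a prime power and F a finite field with q elements. For nonzero x, y ∈ F², let v_{x,y} : SL(2,F) → ℂ be the function with v_{x,y}(g) = 1 if g x = y and v_{x,y}(g) = 0 otherwise. If S ⊆ SL(2,F) is an intersecting set of maximum size |S| = q, then the indicator function of S lies in the ℂ-linear span of the vectors {v_{x,y} : x, y ∈ F² \ {0}}. (SL(2,F) has the EKR-module property.) -/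
/-- The 2 by 2 determinant of a pair of vectors. -/
def crossTwo {F : Type*} [Field F] (x u : Fin 2 → F) : F := x 0 * u 1 - x 1 * u 0

lemma crossTwo_mulVec {F : Type*} [Field F] (g : Matrix.SpecialLinearGroup (Fin 2) F)
    (x u : Fin 2 → F) :
    crossTwo ((g : Matrix (Fin 2) (Fin 2) F).mulVec x)
      ((g : Matrix (Fin 2) (Fin 2) F).mulVec u) = crossTwo x u := by
  have h := g.det_coe
  rw [Matrix.det_fin_two] at h
  simp only [crossTwo, Matrix.mulVec, dotProduct, Fin.sum_univ_two]
  linear_combination (x 0 * u 1 - x 1 * u 0) * h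

/-- Vectors in the plane expand in a basis. -/
lemma crossTwo_expand {F : Type*} [Field F] (x u w : Fin 2 → F) :
    crossTwo x u • w = crossTwo w u • x + crossTwo x w • u := by
  ext i
  fin_cases i <;> simp [crossTwo] <;> ring

/-- Two maps agreeing at a nonzero vector `u` agree at any proportional vector. -/
lemma agree_of_cross {F : Type*} [Field F] (A B : Matrix (Fin 2) (Fin 2) F)
    (x u : Fin 2 → F) (hu : u ≠ 0) (h : crossTwo x u = 0) (hA : A.mulVec u = B.mulVec u) :
    A.mulVec x = B.mulVec x := by
  have hx : ∃ c : F, x = c • u := by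
    unfold crossTwo at h
    by_cases h0 : u 0 = 0
    · have h1 : u 1 ≠ 0 := by
        intro h1; apply hu; ext i; fin_cases i <;> simp [h0, h1]
      refine ⟨x 1 / u 1, ?_⟩
      ext i
      fin_cases i
      · simp [h0] at h ⊢; tauto
      · simp [h1]
    · refine ⟨x 0 / u 0, ?_⟩
      ext i
      fin_cases i
      · simp [h0]
      · simp; field_simp; linear_combination -h
  obtain ⟨c, rfl⟩ := hx
  rw [Matrix.mulVec_smul, Matrix.mulVec_smul, hA]

lemma agree_basis {F : Type*} [Field F] (A B : Matrix (Fin 2) (Fin 2) F)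
    (x u : Fin 2 → F) (h : crossTwo x u ≠ 0) (hx : A.mulVec x = B.mulVec x)
    (hu : A.mulVec u = B.mulVec u) (w : Fin 2 → F) : A.mulVec w = B.mulVec w := by
  have e := crossTwo_expand x u w
  have : crossTwo x u • A.mulVec w = crossTwo x u • B.mulVec w := by
    rw [← Matrix.mulVec_smul, ← Matrix.mulVec_smul, e]
    simp only [Matrix.mulVec_add, Matrix.mulVec_smul, hx, hu]
  exact smul_right_injective _ h this

lemma three_agree {F : Type*} [Field F] (g k h : Matrix.SpecialLinearGroup (Fin 2) F)
    (hne : g ≠ k) (x u w : Fin 2 → F) (hu : u ≠ 0) (hw : w ≠ 0)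
    (hx : (g : Matrix (Fin 2) (Fin 2) F).mulVec x = (k : Matrix (Fin 2) (Fin 2) F).mulVec x)
    (hgu : (h : Matrix (Fin 2) (Fin 2) F).mulVec u = (g : Matrix (Fin 2) (Fin 2) F).mulVec u)
    (hkw : (h : Matrix (Fin 2) (Fin 2) F).mulVec w = (k : Matrix (Fin 2) (Fin 2) F).mulVec w) :
    (h : Matrix (Fin 2) (Fin 2) F).mulVec x = (g : Matrix (Fin 2) (Fin 2) F).mulVec x := by
  by_cases c1 : crossTwo x u = 0
  · exact agree_of_cross _ _ x u hu c1 hgu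
  by_cases c2 : crossTwo x w = 0
  · rw [hx]; exact agree_of_cross _ _ x w hw c2 hkw
  exfalso
  have hQP : (k : Matrix (Fin 2) (Fin 2) F).mulVec u = (g : Matrix (Fin 2) (Fin 2) F).mulVec u := by
    have e := crossTwo_expand x u w
    have d1 := crossTwo_mulVec g x u
    have d2 := crossTwo_mulVec k x u
    have d3 := crossTwo_mulVec h x u
    have e1 := congrArg (fun v => (h : Matrix (Fin 2) (Fin 2) F).mulVec v) e
    have e2 := congrArg (fun v => (k : Matrix (Fin 2) (Fin 2) F).mulVec v) e
    simp only [Matrix.mulVec_add, Matrix.mulVec_smul] at e1 e2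
    rw [hkw, hgu] at e1
    rw [hgu] at d3
    rw [← hx] at d2 e2
    rw [e2] at e1
    generalize (k : Matrix (Fin 2) (Fin 2) F).mulVec u = Q at *
    generalize (g : Matrix (Fin 2) (Fin 2) F).mulVec u = P at *
    generalize (g : Matrix (Fin 2) (Fin 2) F).mulVec x = X at *
    generalize (h : Matrix (Fin 2) (Fin 2) F).mulVec x = Y at *
    have f0 := congrFun e1 0
    have f1 := congrFun e1 1
    simp only [Pi.add_apply, Pi.smul_apply, smul_eq_mul] at f0 f1
    generalize crossTwo x u = D at *
    generalize crossTwo x w = b at *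
    generalize crossTwo w u = a at *
    unfold crossTwo at d1 d2 d3
    -- z = Q - P is parallel to X and to P
    have z1 : X 0 * (Q 1 - P 1) - X 1 * (Q 0 - P 0) = 0 := by linear_combination d2 - d1
    have z2 : (Q 0 - P 0) * P 1 - (Q 1 - P 1) * P 0 = 0 := by
      have : b * ((Q 0 - P 0) * P 1 - (Q 1 - P 1) * P 0) = 0 := by
        linear_combination P 1 * f0 - P 0 * f1 + a * d3 - a * d1
      exact (mul_eq_zero.mp this).resolve_left c2
    have z3 : D * (Q 0 - P 0) = 0 := by
      linear_combination -(Q 0 - P 0) * d1 + X 0 * z2 + P 0 * z1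
    have z4 : D * (Q 1 - P 1) = 0 := by
      linear_combination -(Q 1 - P 1) * d1 + X 1 * z2 + P 1 * z1
    ext i
    fin_cases i
    · exact sub_eq_zero.mp ((mul_eq_zero.mp z3).resolve_left c1)
    · exact sub_eq_zero.mp ((mul_eq_zero.mp z4).resolve_left c1)
  apply hne
  apply Subtype.ext
  apply Matrix.mulVec_injective
  funext v
  exact agree_basis _ _ x u c1 hx hQP.symm v

lemma stab_inj {F : Type*} [Field F] (x y : Fin 2 → F) (hx : x ≠ 0) (hy : y ≠ 0) :
    ∃ i j : Fin 2, Set.InjOn (fun g : Matrix.SpecialLinearGroup (Fin 2) F => g.1 i j)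
      {g | (g : Matrix (Fin 2) (Fin 2) F).mulVec x = y} := by
  have key : ∀ g : Matrix.SpecialLinearGroup (Fin 2) F,
      (g : Matrix (Fin 2) (Fin 2) F).mulVec x = y →
      g.1 0 0 * x 0 + g.1 0 1 * x 1 = y 0 ∧ g.1 1 0 * x 0 + g.1 1 1 * x 1 = y 1 ∧
      g.1 1 1 * y 0 - g.1 0 1 * y 1 = x 0 ∧ g.1 0 0 * y 1 - g.1 1 0 * y 0 = x 1 := by
    intro g hg
    have h := g.det_coe
    rw [Matrix.det_fin_two] at h
    have h0 := congrFun hg 0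
    have h1 := congrFun hg 1
    simp only [Matrix.mulVec, dotProduct, Fin.sum_univ_two] at h0 h1
    refine ⟨h0, h1, ?_, ?_⟩
    · rw [← h0, ← h1]; linear_combination x 0 * h
    · rw [← h0, ← h1]; linear_combination x 1 * h
  have nz : ∀ z : Fin 2 → F, z ≠ 0 → z 0 ≠ 0 ∨ z 1 ≠ 0 := by
    intro z hz
    by_contra! hc
    apply hz; ext i; fin_cases i <;> simp [hc.1, hc.2]
  have fin : ∀ g k : Matrix.SpecialLinearGroup (Fin 2) F, g.1 0 0 = k.1 0 0 →
      g.1 0 1 = k.1 0 1 → g.1 1 0 = k.1 1 0 → g.1 1 1 = k.1 1 1 → g = k := by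
    intro g k h1 h2 h3 h4
    apply Subtype.ext
    ext i j
    fin_cases i <;> fin_cases j <;> assumption
  rcases nz x hx with hx0 | hx0 <;> rcases nz y hy with hy0 | hy0
  · refine ⟨0, 1, fun g hg k hk e => ?_⟩
    obtain ⟨a1, a2, a3, a4⟩ := key g hg
    obtain ⟨b1, b2, b3, b4⟩ := key k hk
    simp only at e
    apply fin <;> grind
  · refine ⟨1, 1, fun g hg k hk e => ?_⟩
    obtain ⟨a1, a2, a3, a4⟩ := key g hg
    obtain ⟨b1, b2, b3, b4⟩ := key k hk
    simp only at e
    apply fin <;> grind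
  · refine ⟨0, 0, fun g hg k hk e => ?_⟩
    obtain ⟨a1, a2, a3, a4⟩ := key g hg
    obtain ⟨b1, b2, b3, b4⟩ := key k hk
    simp only at e
    apply fin <;> grind
  · refine ⟨1, 0, fun g hg k hk e => ?_⟩
    obtain ⟨a1, a2, a3, a4⟩ := key g hg
    obtain ⟨b1, b2, b3, b4⟩ := key k hk
    simp only at e
    apply fin <;> grind

/-- **EKR-module property for SL(2,q).**  The indicator function of any maximum
intersecting set in `SL(2,F)` (of size `q`) lies in the complex span of the
characteristic vectors of the canonical intersecting sets. -/
theorem sl2_ekr_module (q : ℕ) (hq : IsPrimePow q) (F : Type*) [Field F] [Fintype F]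
    (hF : Fintype.card F = q) (S : Set (Matrix.SpecialLinearGroup (Fin 2) F))
    (hS : ∀ g ∈ S, ∀ h ∈ S, ∃ v : Fin 2 → F, v ≠ 0 ∧
      (g : Matrix (Fin 2) (Fin 2) F).mulVec v = (h : Matrix (Fin 2) (Fin 2) F).mulVec v)
    (hcard : S.ncard = q) :
    Set.indicator S (fun _ => (1 : ℂ)) ∈
      Submodule.span ℂ {f : Matrix.SpecialLinearGroup (Fin 2) F → ℂ |
        ∃ x y : Fin 2 → F, x ≠ 0 ∧ y ≠ 0 ∧
          f = Set.indicator {g : Matrix.SpecialLinearGroup (Fin 2) F |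
                (g : Matrix (Fin 2) (Fin 2) F).mulVec x = y} (fun _ => (1 : ℂ))} := by
  have hfin : S.Finite := Set.finite_of_ncard_pos (by rw [hcard]; exact hq.pos)
  have h1 : 1 < S.ncard := by rw [hcard]; exact hq.one_lt
  obtain ⟨g, hg, k, hk, hne⟩ := (Set.one_lt_ncard hfin).mp h1
  obtain ⟨x, hx, hgk⟩ := hS g hg k hk
  have hy : (g : Matrix (Fin 2) (Fin 2) F).mulVec x ≠ 0 := by
    intro h0
    apply hx
    have : ((g⁻¹ * g : Matrix.SpecialLinearGroup (Fin 2) F) : Matrix (Fin 2) (Fin 2) F).mulVec x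
        = 0 := by
      rw [Matrix.SpecialLinearGroup.coe_mul, ← Matrix.mulVec_mulVec, h0, Matrix.mulVec_zero]
    simpa using this
  apply Submodule.subset_span
  refine ⟨x, _, hx, hy, ?_⟩
  congr 1
  obtain ⟨i, j, hinj⟩ := stab_inj x _ hx hy
  apply Set.eq_of_subset_of_ncard_le
  · intro h hh
    obtain ⟨u, hu, hgu⟩ := hS h hh g hg
    obtain ⟨w, hw, hkw⟩ := hS h hh k hk
    exact three_agree g k h hne x u w hu hw hgk hgu hkw
  · rw [hcard, ← hF, ← Nat.card_eq_fintype_card, ← Set.ncard_univ]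
    exact Set.ncard_le_ncard_of_injOn _ (fun _ _ => Set.mem_univ _) hinj
  · exact Set.Finite.of_finite_image (Set.toFinite _) hinj
end

section
/- Let q be a prime power and F a finite field with q elements. For nonzero x, y ∈ F², let v_{x,y} : GL(2,F) → ℂ be the function with v_{x,y}(g) = 1 if g x = y and v_{x,y}(g) = 0 otherwise. Then the ℂ-linear span of the set {v_{x,y} : x, y ∈ F² \ {0}} inside the space of all functions GL(2,F) → ℂ has dimension q³ + q² − 3q − 1. -/
section abs
variable {G X P : Type*} [Fintype G] [Fintype X] [Fintype P]

/-- The linear map whose range is the module. -/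
noncomputable def ekrT (act : G → X → X) (r : P → X) : (P × X → ℂ) →ₗ[ℂ] (G → ℂ) where
  toFun f := fun g => ∑ p, f (p, act g (r p))
  map_add' f h := by ext g; simp [Finset.sum_add_distrib]
  map_smul' c f := by ext g; simp [Finset.mul_sum]

/-- Functions of the form `a(p) + b(π y)`. -/
def ekrS (π : X → P) : ((P → ℂ) × (P → ℂ)) →ₗ[ℂ] (P × X → ℂ) where
  toFun ab := fun z => ab.1 z.1 + ab.2 (π z.2)
  map_add' f h := by ext g; simp; ring
  map_smul' c f := by ext g; simp; ring

/-- Total sum. -/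
noncomputable def ekrSig : ((P → ℂ) × (P → ℂ)) →ₗ[ℂ] ℂ where
  toFun ab := ∑ p, ab.1 p + ∑ p, ab.2 p
  map_add' f h := by simp [Finset.sum_add_distrib]; ring
  map_smul' c f := by simp [Finset.mul_sum, mul_add]


lemma ekrT_S (act : G → X → X) (actP : G → Equiv.Perm P) (r : P → X) (π : X → P)
    (hr : ∀ p, π (r p) = p) (heq : ∀ g x, π (act g x) = actP g (π x))
    (ab : (P → ℂ) × (P → ℂ)) (g : G) :
    ekrT act r (ekrS π ab) g = ekrSig ab := by
  simp only [ekrT, ekrS, ekrSig, LinearMap.coe_mk, AddHom.coe_mk, Finset.sum_add_distrib, heq, hr]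
  rw [Equiv.sum_comp (actP g) ab.2]

open Classical in
lemma ekr_key (act : G → X → X) (actP : G → Equiv.Perm P) (r : P → X) (π : X → P)
    (hr : ∀ p, π (r p) = p) (heq : ∀ g x, π (act g x) = actP g (π x))
    (hreg : ∀ p p' y y', p ≠ p' → π y ≠ π y' → ∃! g, act g (r p) = y ∧ act g (r p') = y')
    [Nontrivial P] (f : P × X → ℂ) (hf : ekrT act r f = 0) :
    ∃ ab, f = ekrS π ab := by
  have bij : ∀ p p' y, p ≠ p' → ∀ h : X → ℂ,
      ∑ g with act g (r p) = y, h (act g (r p')) = ∑ y' with π y' ≠ π y, h y' := by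
    intro p p' y hp h
    refine Finset.sum_bij (fun g _ => act g (r p')) ?_ ?_ ?_ ?_
    · intro g hg
      simp only [Finset.mem_filter, Finset.mem_univ, true_and] at hg ⊢
      rw [← hg, heq, heq, hr, hr]
      exact fun h => hp ((actP g).injective h).symm
    · intro g hg g' hg' e
      simp only [Finset.mem_filter, Finset.mem_univ, true_and] at hg hg'
      have hne : π y ≠ π (act g (r p')) := by
        rw [← hg, heq, heq, hr, hr]
        exact fun h => hp ((actP g).injective h)
      exact (hreg p p' y _ hp hne).unique ⟨hg, rfl⟩ ⟨hg', e.symm⟩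
    · intro y' hy'
      simp only [Finset.mem_filter, Finset.mem_univ, true_and] at hy'
      obtain ⟨g, hg, -⟩ := hreg p p' y y' hp (Ne.symm hy')
      exact ⟨g, by simp [hg.1], hg.2⟩
    · intros; rfl
  -- main identity
  have main : ∀ p y, (∑ y' with π y' ≠ π y, (1 : ℂ)) * f (p, y)
      = - ∑ p' ∈ Finset.univ.erase p, ∑ y' with π y' ≠ π y, f (p', y') := by
    intro p y
    obtain ⟨p0, hp0⟩ := exists_ne p
    have h0 : ∑ g with act g (r p) = y, ∑ p', f (p', act g (r p')) = 0 :=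
      Finset.sum_eq_zero fun g _ => congrFun hf g
    rw [Finset.sum_comm, ← Finset.add_sum_erase _ _ (Finset.mem_univ p)] at h0
    have h1 : ∑ g with act g (r p) = y, f (p, act g (r p))
        = (∑ y' with π y' ≠ π y, (1 : ℂ)) * f (p, y) := by
      rw [← bij p p0 y hp0.symm (fun _ => 1), Finset.sum_mul]
      refine Finset.sum_congr rfl fun g hg => ?_
      simp only [Finset.mem_filter, Finset.mem_univ, true_and] at hg
      rw [hg, one_mul]
    rw [h1] at h0
    rw [eq_neg_of_add_eq_zero_left h0]
    congr 1
    refine Finset.sum_congr rfl fun p' hp' => ?_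
    exact bij p p' y (Finset.ne_of_mem_erase hp').symm (fun y' => f (p', y'))
  have npos : ∀ y, (∑ y' with π y' ≠ π y, (1 : ℂ)) ≠ 0 := by
    intro y
    obtain ⟨p0, hp0⟩ := exists_ne (π y)
    simp only [Finset.sum_const, nsmul_eq_mul, mul_one]
    rw [Nat.cast_ne_zero]
    exact (Finset.card_pos.mpr ⟨r p0, by simp [hr, hp0]⟩).ne'
  have const : ∀ p y y', π y = π y' → f (p, y) = f (p, y') := by
    intro p y y' h
    have a := main p y
    have b := main p y'
    rw [h, ← b] at a
    exact mul_left_cancel₀ (npos y') a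
  have X0 : (Fintype.card X : ℂ) ≠ 0 := by
    obtain ⟨p0⟩ : Nonempty P := inferInstance
    have : Nonempty X := ⟨r p0⟩
    exact Nat.cast_ne_zero.mpr Fintype.card_ne_zero
  have split : ∀ (y : X) (h : X → ℂ), ∑ y', h y' =
      ∑ y' with π y' = π y, h y' + ∑ y' with π y' ≠ π y, h y' := fun y h =>
    (Finset.sum_filter_add_sum_filter_not _ _ _).symm
  have fin : ∀ p y, (Fintype.card X : ℂ) * f (p, y) =
      ∑ y', f (p, y') + ∑ p', ∑ y' with π y' = π y, f (p', y') - ∑ p', ∑ y', f (p', y') := by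
    intro p y
    have m := main p y
    have c1 := split y (fun _ => 1)
    have c2 := split y (fun y' => f (p, y'))
    have c3 : ∑ y' with π y' = π y, f (p, y') = (∑ y' with π y' = π y, 1) * f (p, y) := by
      rw [Finset.sum_mul]
      refine Finset.sum_congr rfl fun y' hy' => ?_
      simp only [Finset.mem_filter, Finset.mem_univ, true_and] at hy'
      rw [one_mul, const p y' y hy']
    have c4 : ∑ p', ∑ y', f (p', y') = ∑ p', ∑ y' with π y' = π y, f (p', y')
        + ∑ p', ∑ y' with π y' ≠ π y, f (p', y') := by
      rw [← Finset.sum_add_distrib]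
      exact Finset.sum_congr rfl fun p' _ => split y _
    rw [← Finset.add_sum_erase (a := p) _ (fun p' => ∑ y' with π y' ≠ π y, f (p', y'))
      (Finset.mem_univ p)] at c4
    have c5 : (Fintype.card X : ℂ) = ∑ y' : X, (1 : ℂ) := by simp
    rw [c5, c1, c4, c2, add_mul, m, c3]
    ring
  refine ⟨(fun p => (∑ y', f (p, y')) / Fintype.card X, fun Q =>
    (∑ p', ∑ y' with π y' = Q, f (p', y') - ∑ p', ∑ y', f (p', y')) / Fintype.card X), ?_⟩
  ext ⟨p, y⟩
  simp only [ekrS, LinearMap.coe_mk, AddHom.coe_mk]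
  rw [← add_div, eq_div_iff X0, mul_comm, fin]
  ring

lemma ekr_rank (act : G → X → X) (actP : G → Equiv.Perm P) (r : P → X) (π : X → P)
    (hr : ∀ p, π (r p) = p) (heq : ∀ g x, π (act g x) = actP g (π x))
    (hreg : ∀ p p' y y', p ≠ p' → π y ≠ π y' → ∃! g, act g (r p) = y ∧ act g (r p') = y')
    [Nontrivial P] [Nonempty G] :
    Module.finrank ℂ (LinearMap.range (ekrT act r)) + 2 * Fintype.card P
      = Fintype.card P * Fintype.card X + 2 := by
  classical
  obtain ⟨p0⟩ : Nonempty P := inferInstance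
  have hT := LinearMap.finrank_range_add_finrank_ker (ekrT act r)
  have hsig := LinearMap.finrank_range_add_finrank_ker (ekrSig (P := P))
  have hsurj : LinearMap.range (ekrSig (P := P)) = ⊤ := by
    rw [LinearMap.range_eq_top]
    intro c
    exact ⟨(Pi.single p0 c, 0), by simp [ekrSig]⟩
  let S' := (ekrS π).domRestrict (LinearMap.ker (ekrSig (P := P)))
  have hS := LinearMap.finrank_range_add_finrank_ker S'
  have hrange : LinearMap.range S' = LinearMap.ker (ekrT act r) := by
    ext f
    constructor
    · rintro ⟨⟨ab, hab⟩, rfl⟩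
      rw [LinearMap.mem_ker] at hab ⊢
      ext g
      exact (ekrT_S act actP r π hr heq ab g).trans hab
    · intro hf
      rw [LinearMap.mem_ker] at hf
      obtain ⟨ab, rfl⟩ := ekr_key act actP r π hr heq hreg f hf
      obtain ⟨g⟩ : Nonempty G := inferInstance
      refine ⟨⟨ab, ?_⟩, rfl⟩
      rw [LinearMap.mem_ker, ← ekrT_S act actP r π hr heq ab g, hf]
      rfl
  have hker : Module.finrank ℂ (LinearMap.ker S') = 1 := by
    refine finrank_eq_one (⟨⟨(fun _ => 1, fun _ => -1), ?_⟩, ?_⟩ : LinearMap.ker S') ?_ ?_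
    · simp [ekrSig]
    · rw [LinearMap.mem_ker]; ext z; simp [S', ekrS]
    · intro h
      have := congrArg (fun z => z.1.1.1 p0) h
      simp at this
    · rintro ⟨⟨⟨a, b⟩, h1⟩, h2⟩
      rw [LinearMap.mem_ker] at h2
      have h3 : ∀ p p', a p + b p' = 0 := by
        intro p p'
        have := congrFun h2 (p, r p')
        simpa [S', ekrS, hr] using this
      refine ⟨a p0, ?_⟩
      ext p
      · have e1 := h3 p p0
        have e2 := h3 p0 p0
        simp
        linear_combination e2 - e1
      · have e1 := h3 p0 p
        simp
        linear_combination - e1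
  rw [hsurj] at hsig
  rw [hrange, hker] at hS
  simp at hsig hT
  omega
end abs

lemma gl2_reg {F : Type*} [Field F] (u v y z : Fin 2 → F) (h1 : LinearIndependent F ![u, v])
    (h2 : LinearIndependent F ![y, z]) :
    ∃! g : GL (Fin 2) F, g • u = y ∧ g • v = z := by
  have hA : IsUnit (Matrix.of ![u, v]).transpose := by
    rw [Matrix.isUnit_transpose, ← Matrix.linearIndependent_rows_iff_isUnit]; exact h1
  have hB : IsUnit (Matrix.of ![y, z]).transpose := by
    rw [Matrix.isUnit_transpose, ← Matrix.linearIndependent_rows_iff_isUnit]; exact h2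
  obtain ⟨A, hA⟩ := hA
  obtain ⟨B, hB⟩ := hB
  have key : ∀ g : GL (Fin 2) F, (g • u = y ∧ g • v = z) ↔ g * A = B := by
    intro g
    rw [Units.ext_iff, Units.val_mul, hA, hB]
    have e : ∀ w : Fin 2 → F, g • w = (g : Matrix (Fin 2) (Fin 2) F).mulVec w := fun w => rfl
    rw [e, e, ← Matrix.ext_iff, funext_iff, funext_iff]
    simp only [Matrix.mul_apply, Matrix.mulVec, dotProduct, Fin.forall_fin_two, Fin.sum_univ_two,
      Matrix.transpose_apply, Matrix.of_apply, Matrix.cons_val_zero, Matrix.cons_val_one]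
    tauto
  simp only [key]
  exact ⟨B * A⁻¹, by simp, fun g hg => by rw [← hg]; simp⟩

/-- **Dimension of the EKR-module of GL(2,q).**  The complex span of the characteristic
vectors of the canonical intersecting sets of `GL(2,F)` has dimension `q³ + q² - 3q - 1`. -/
theorem gl2_ekr_module_dim (q : ℕ) (hq : IsPrimePow q) (F : Type*) [Field F] [Fintype F]
    (hF : Fintype.card F = q) :
    (Module.finrank ℂ
      (Submodule.span ℂ {f : GL (Fin 2) F → ℂ | ∃ x y : Fin 2 → F, x ≠ 0 ∧ y ≠ 0 ∧
        f = Set.indicator {g : GL (Fin 2) F | (g : Matrix (Fin 2) (Fin 2) F).mulVec x = y}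
              (fun _ => (1 : ℂ))}) : ℤ) =
      (q : ℤ) ^ 3 + (q : ℤ) ^ 2 - 3 * (q : ℤ) - 1 := by
  classical
  let V := Fin 2 → F
  let X := {v : V // v ≠ 0}
  let P := Projectivization F V
  let _ : Fintype P := Fintype.ofFinite P
  let _ : Fintype (GL (Fin 2) F) := Fintype.ofFinite _
  let act : GL (Fin 2) F → X → X := fun g x => ⟨g • x.1, (smul_ne_zero_iff_ne g).mpr x.2⟩
  let actP : GL (Fin 2) F → Equiv.Perm P := fun g => MulAction.toPerm g
  let r : P → X := fun p => ⟨p.rep, p.rep_nonzero⟩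
  let π : X → P := fun x => Projectivization.mk F x.1 x.2
  have hr : ∀ p, π (r p) = p := fun p => p.mk_rep
  have heq : ∀ g x, π (act g x) = actP g (π x) := fun g x => rfl
  have hLI : ∀ x y : X, π x ≠ π y → LinearIndependent F ![x.1, y.1] := by
    intro x y hxy
    rw [LinearIndependent.pair_iff' x.2]
    intro a ha
    apply hxy
    exact ((Projectivization.mk_eq_mk_iff' F _ _ y.2 x.2).mpr ⟨a, ha⟩).symm
  have hreg : ∀ p p' y y', p ≠ p' → π y ≠ π y' →
      ∃! g, act g (r p) = y ∧ act g (r p') = y' := by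
    intro p p' y y' hp hy
    have h := gl2_reg _ _ _ _ (hLI (r p) (r p') (by rwa [hr, hr])) (hLI y y' hy)
    obtain ⟨g, hg, hu⟩ := h
    exact ⟨g, ⟨Subtype.ext hg.1, Subtype.ext hg.2⟩, fun g' h' =>
      hu g' ⟨congrArg Subtype.val h'.1, congrArg Subtype.val h'.2⟩⟩
  have cP : Fintype.card P = q + 1 := by
    rw [← Nat.card_eq_fintype_card, Projectivization.card_of_finrank_two F V (by simp [V]),
      Nat.card_eq_fintype_card, hF]
  have cX : Fintype.card X = q ^ 2 - 1 := by
    simp [X, V, hF]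
  have hq2 := hq.two_le
  have : Nontrivial P := Fintype.one_lt_card_iff_nontrivial.mp (by omega)
  have rank := ekr_rank act actP r π hr heq hreg
  have hspan : LinearMap.range (ekrT act r) =
      Submodule.span ℂ {f : GL (Fin 2) F → ℂ | ∃ x y : Fin 2 → F, x ≠ 0 ∧ y ≠ 0 ∧
        f = Set.indicator {g : GL (Fin 2) F | (g : Matrix (Fin 2) (Fin 2) F).mulVec x = y}
              (fun _ => (1 : ℂ))} := by
    have single : ∀ p y, ekrT act r (Pi.single (p, y) 1) =
        Set.indicator {g : GL (Fin 2) F | (g : Matrix (Fin 2) (Fin 2) F).mulVec p.rep = y.1}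
              (fun _ => (1 : ℂ)) := by
      intro p y
      ext g
      have e : act g (r p) = y ↔ (g : Matrix (Fin 2) (Fin 2) F).mulVec p.rep = y.1 :=
        Subtype.ext_iff
      simp only [ekrT, LinearMap.coe_mk, AddHom.coe_mk, Set.indicator_apply, Set.mem_ofPred_eq, ← e]
      rw [Finset.sum_eq_single p]
      · simp [Pi.single_apply]
      · intro b _ hb
        simp [Pi.single_apply, hb]
      · simp
    apply le_antisymm
    · rw [LinearMap.range_eq_map, ← (Pi.basisFun ℂ (P × X)).span_eq, Submodule.map_span,
        Submodule.span_le]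
      rintro _ ⟨_, ⟨⟨p, y⟩, rfl⟩, rfl⟩
      apply Submodule.subset_span
      refine ⟨p.rep, y.1, p.rep_nonzero, y.2, ?_⟩
      rw [Pi.basisFun_apply, single]
    · rw [Submodule.span_le]
      rintro _ ⟨x, y, hx, hy, rfl⟩
      obtain ⟨a, ha⟩ := Projectivization.exists_smul_eq_mk_rep F x hx
      refine ⟨Pi.single (Projectivization.mk F x hx, ⟨a • y, (smul_ne_zero_iff_ne a).mpr hy⟩) 1, ?_⟩
      rw [single]
      congr 1
      ext g
      simp only [Set.mem_ofPred_eq, ← ha]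
      rw [Units.smul_def, Units.smul_def, Matrix.mulVec_smul]
      exact smul_right_inj a.ne_zero
  rw [← hspan]
  rw [cP, cX] at rank
  have h1 : 1 ≤ q ^ 2 := Nat.one_le_pow _ _ (by omega)
  zify [h1] at rank
  linear_combination rank
end

section
/- Let G be a finite group acting transitively on a finite set X with |X| = n. Let ω : G → ℝ be a function that vanishes on every element of G that is not a derangement (i.e., ω(g) = 0 whenever g fixes some point of X). Suppose that for every irreducible complex character χ of G other than the trivial character, the real part of Σ_{g ∈ G} ω(g) χ(g) is at least −χ(1). Then Σ_{g ∈ G} ω(g) ≤ n − 1. -/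
open Module in
theorem lp_char_add (G : Type) [Group G] (V : Type) [AddCommGroup V] [Module ℂ V]
    [FiniteDimensional ℂ V] (ρ : Representation ℂ G V) (A B : Subrepresentation ρ)
    (h : IsCompl A B) :
    ρ.character = A.toRepresentation.character + B.toRepresentation.character := by
  have hc : IsCompl A.toSubmodule B.toSubmodule := by
    constructor
    · rw [disjoint_iff]
      exact congrArg Subrepresentation.toSubmodule (disjoint_iff.mp h.1)
    · rw [codisjoint_iff]
      exact congrArg Subrepresentation.toSubmodule (codisjoint_iff.mp h.2)
  ext g
  have hin : DirectSum.IsInternal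
      (fun b : Bool => cond b A.toSubmodule B.toSubmodule) := by
    rw [DirectSum.isInternal_submodule_iff_isCompl _ (i := true) (j := false) (by simp)
      (by ext b; cases b <;> simp)]
    exact hc
  have hf : ∀ b : Bool, Set.MapsTo (ρ g)
      ((cond b A.toSubmodule B.toSubmodule : Submodule ℂ V) : Set V)
      ((cond b A.toSubmodule B.toSubmodule : Submodule ℂ V) : Set V) := by
    intro b
    cases b
    · exact B.apply_mem_toSubmodule g
    · exact A.apply_mem_toSubmodule g
  have := LinearMap.trace_eq_sum_trace_restrict hin hf
  rw [Fintype.sum_bool] at this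
  exact this

theorem lp_ind (G : Type) [Group G] [Fintype G] (L : (G → ℂ) →+ ℝ)
    (h : ∀ (V : Type) [AddCommGroup V] [Module ℂ V] [FiniteDimensional ℂ V]
      (ρ : Representation ℂ G V), ρ.IsIrreducible → 0 ≤ L ρ.character) (n : ℕ) :
    ∀ (V : Type) [AddCommGroup V] [Module ℂ V] [FiniteDimensional ℂ V]
      (ρ : Representation ℂ G V), Module.finrank ℂ V = n → 0 ≤ L ρ.character := by
  induction n using Nat.strong_induction_on with
  | _ n ih =>
    intro V _ _ _ ρ hn
    by_cases h0 : Subsingleton V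
    · have : ρ.character = 0 := by
        ext g
        simp only [Representation.character, Pi.zero_apply]
        rw [Subsingleton.elim (ρ g) 0, map_zero]
      rw [this, map_zero]
    rw [not_subsingleton_iff_nontrivial] at h0
    by_cases hi : ρ.IsIrreducible
    · exact h V ρ hi
    have hnt : Nontrivial (Subrepresentation ρ) :=
      ⟨⊥, ⊤, fun e => bot_ne_top (α := Submodule ℂ V)
        (congrArg Subrepresentation.toSubmodule e)⟩
    have : ∃ A : Subrepresentation ρ, A ≠ ⊥ ∧ A ≠ ⊤ := by
      by_contra hcon
      push Not at hcon
      exact hi ⟨fun A => or_iff_not_imp_left.mpr (hcon A)⟩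
    obtain ⟨A, hA0, hA1⟩ := this
    have hss : ρ.IsSemisimpleRepresentation := by
      rw [Representation.isSemisimpleRepresentation_iff_isSemisimpleModule_asModule]
      infer_instance
    obtain ⟨B, hAB⟩ := hss.exists_isCompl A
    have hB1 : B ≠ ⊤ := by
      rintro rfl
      exact hA0 (eq_bot_of_isCompl_top hAB)
    have key : ∀ C : Subrepresentation ρ, C ≠ ⊤ → 0 ≤ L C.toRepresentation.character := by
      intro C hC
      refine ih _ ?_ _ C.toRepresentation rfl
      rw [← hn]
      apply Submodule.finrank_lt
      intro e
      exact hC (Subrepresentation.toSubmodule_injective e)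
    rw [lp_char_add G V ρ A B hAB, map_add]
    exact add_nonneg (key A hA1) (key B hB1)

theorem lp_simple (G : Type) [Group G] [Fintype G] (V : Type) [AddCommGroup V] [Module ℂ V]
    [FiniteDimensional ℂ V] (ρ : Representation ℂ G V) (h : ρ.IsIrreducible) :
    CategoryTheory.Simple (FDRep.of ρ) := by
  have := invertibleOfNonzero (NeZero.ne (Nat.card G : ℂ))
  rw [FDRep.simple_iff_char_is_norm_one]
  have h1 := Representation.char_orthonormal ρ ρ
  rw [if_pos ⟨Representation.Equiv.refl ρ⟩, inv_mul_eq_one₀ (NeZero.ne _)] at h1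
  exact h1.symm

theorem lp_avg (G : Type) [Group G] [Fintype G] (V : Type) [AddCommGroup V] [Module ℂ V]
    [FiniteDimensional ℂ V] (ρ : Representation ℂ G V) (h : ρ.IsIrreducible)
    (hne : ρ.character ≠ fun _ => 1) : ∑ g, ρ.character g = 0 := by
  have := invertibleOfNonzero (NeZero.ne (Nat.card G : ℂ))
  have hirr : (Representation.trivial ℂ G ℂ).IsIrreducible := by
    have hnt : Nontrivial (Subrepresentation (Representation.trivial ℂ G ℂ)) :=
      ⟨⊥, ⊤, fun e => bot_ne_top (α := Submodule ℂ ℂ)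
        (congrArg Subrepresentation.toSubmodule e)⟩
    exact ⟨fun A => (eq_bot_or_eq_top A.toSubmodule).imp
      (fun e => Subrepresentation.toSubmodule_injective e)
      (fun e => Subrepresentation.toSubmodule_injective e)⟩
  have hone : (Representation.trivial ℂ G ℂ).character = fun _ => 1 := by
    ext g
    have : Representation.trivial ℂ G ℂ g = 1 := rfl
    simp [Representation.character, this]
  have h1 := Representation.char_orthonormal ρ (Representation.trivial ℂ G ℂ)
  rw [if_neg] at h1
  · rw [hone] at h1
    simpa using h1
  · rintro ⟨e⟩
    exact hne ((Representation.char_iso e).symm.trans hone)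

theorem lp_perm (G : Type) [Group G] (X : Type) [Fintype X] [MulAction G X] (g : G) :
    (Representation.ofMulAction ℂ G X).character g
      = (Nat.card (MulAction.fixedBy X g) : ℂ) := by
  classical
  let b : Module.Basis X ℂ (MonoidAlgebra ℂ X) := ⟨MonoidAlgebra.coeffLinearEquiv ℂ⟩
  rw [Representation.character, LinearMap.trace_eq_matrix_trace ℂ b, Matrix.trace]
  have : ∀ x, (LinearMap.toMatrix b b (Representation.ofMulAction ℂ G X g)).diag x
      = if g • x = x then 1 else 0 := by
    intro x
    have hb : b x = MonoidAlgebra.single x 1 := by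
      simp [b]
    rw [Matrix.diag_apply, LinearMap.toMatrix_apply, hb, Representation.ofMulAction_single]
    change (MonoidAlgebra.coeffLinearEquiv ℂ (MonoidAlgebra.single (g • x) (1:ℂ))) x = _
    simp [Finsupp.single_apply]
  simp only [this]
  rw [Finset.sum_boole, Nat.card_eq_fintype_card, Fintype.card_subtype]
  rfl

/-- **The linear programming bound (Lemma 2.3).**  Let `G` act transitively on a finite
set `X` of size `n`, and let `ω : G → ℝ` vanish on all non-derangements.  If for every
non-trivial irreducible complex character `χ` of `G` the real part of `∑ g, ω g * χ g`
is at least `-χ(1)`, then `∑ g, ω g ≤ n - 1`. -/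
theorem lp_bound (G : Type) [Group G] [Fintype G] (X : Type) [Fintype X] [Nonempty X]
    [MulAction G X] [MulAction.IsPretransitive G X]
    (ω : G → ℝ)
    (hω : ∀ g : G, (∃ x : X, g • x = x) → ω g = 0)
    (hχ : ∀ V : FDRep ℂ G, CategoryTheory.Simple V →
      V.character ≠ (fun _ => 1) →
      -(V.character 1).re ≤ (∑ g : G, (ω g : ℂ) * V.character g).re) :
    ∑ g : G, ω g ≤ (Fintype.card X : ℝ) - 1 := by
  classical
  have hG : (Fintype.card G : ℝ) ≠ 0 := by exact_mod_cast Fintype.card_ne_zero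
  let c : ℝ := 1 + ∑ g, ω g
  let L : (G → ℂ) →+ ℝ :=
    { toFun := fun f => (∑ g : G, (ω g : ℂ) * f g).re + (f 1).re
        - (∑ g, f g).re / (Fintype.card G : ℝ) * c
      map_zero' := by simp
      map_add' := by
        intro f f'
        simp only [Pi.add_apply, mul_add, Finset.sum_add_distrib, Complex.add_re]
        ring }
  have hL : ∀ f, L f = (∑ g : G, (ω g : ℂ) * f g).re + (f 1).re
        - (∑ g, f g).re / (Fintype.card G : ℝ) * c := fun _ => rfl
  have hpos := lp_ind G L (by
    intro V _ _ _ ρ hρ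
    rw [hL]
    by_cases hne : ρ.character = fun _ => 1
    · rw [hne]
      simp only [mul_one, Finset.sum_const, Finset.card_univ, nsmul_eq_mul, Complex.one_re,
        Complex.natCast_re, div_self hG, one_mul, ← Complex.ofReal_sum, Complex.ofReal_re, c]
      linarith
    · rw [lp_avg G V ρ hρ hne]
      have := hχ (FDRep.of ρ) (lp_simple G V ρ hρ) hne
      change -(ρ.character 1).re ≤ (∑ g : G, (ω g : ℂ) * ρ.character g).re at this
      simp only [Complex.zero_re, zero_div, zero_mul]
      linarith) _ _ (Representation.ofMulAction ℂ G X) rfl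
  rw [hL] at hpos
  have h1 : ∑ g : G, (ω g : ℂ) * (Representation.ofMulAction ℂ G X).character g = 0 := by
    apply Finset.sum_eq_zero
    intro g _
    rw [lp_perm]
    by_cases hg : ∃ x : X, g • x = x
    · rw [hω g hg]; simp
    · have : IsEmpty (MulAction.fixedBy X g) := ⟨fun x => hg ⟨x.1, x.2⟩⟩
      simp
  have h2 : (Representation.ofMulAction ℂ G X).character 1 = (Fintype.card X : ℂ) := by
    rw [lp_perm, MulAction.fixedBy_one_eq_univ, Nat.card_univ, Nat.card_eq_fintype_card]
  have h3 : ∑ g : G, (Representation.ofMulAction ℂ G X).character g = (Fintype.card G : ℂ) := by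
    simp only [lp_perm]
    have hb := MulAction.sum_card_fixedBy_eq_card_orbits_mul_card_group G X
    have ho : Fintype.card (MulAction.orbitRel.Quotient G X) = 1 := by
      rw [Fintype.card_eq_one_iff_nonempty_unique]
      have := (MulAction.pretransitive_iff_subsingleton_quotient G X).mp inferInstance
      obtain ⟨x⟩ := ‹Nonempty X›
      exact ⟨⟨⟨Quotient.mk'' x⟩, fun a => Subsingleton.elim _ _⟩⟩
    rw [ho, one_mul] at hb
    simp only [Nat.card_eq_fintype_card]
    exact_mod_cast hb
  rw [h1, h2, h3] at hpos
  simp only [Complex.zero_re, Complex.natCast_re, div_self hG, one_mul, c] at hpos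
  linarith
end

section
/- Let q be a prime power and F a finite field with q elements. Let M ∈ GL(2,F) be a non-scalar matrix with a unique eigenvalue λ ∈ F (so (M − λI)² = 0 and M is not diagonalizable), and let s ∈ F² be a nonzero eigenvector, M s = λ s. Then for z ∈ F², the affine map f(v) = M v + z maps no affine line of F² to itself if and only if λ = 1 and z does not lie in the line F•s spanned by s. -/
/-- `ℓ ⊆ F²` is an affine line if `ℓ = {u + t • w : t ∈ F}` for some `u, w` with `w ≠ 0`. -/
def IsAffineLine {F : Type*} [Field F] (ℓ : Set (Fin 2 → F)) : Prop :=
  ∃ u w : Fin 2 → F, w ≠ 0 ∧ ℓ = {p | ∃ t : F, p = u + t • w}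

theorem ker_aux {F : Type*} [Field F] (N : Matrix (Fin 2) (Fin 2) F) (hN : N ≠ 0)
    (s w : Fin 2 → F) (hs : s ≠ 0) (h1 : N.mulVec s = 0) (h2 : N.mulVec w = 0) :
    ∃ c : F, w = c • s := by
  have hD : s 0 * w 1 - s 1 * w 0 = 0 := by
    by_contra hD
    apply hN
    ext i j
    have e1 := congrFun h1 i
    have e2 := congrFun h2 i
    simp only [Matrix.mulVec, dotProduct, Fin.sum_univ_two, Pi.zero_apply] at e1 e2
    have g0 : N i 0 * (s 0 * w 1 - s 1 * w 0) = 0 := by linear_combination w 1 * e1 - s 1 * e2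
    have g1 : N i 1 * (s 0 * w 1 - s 1 * w 0) = 0 := by linear_combination s 0 * e2 - w 0 * e1
    have k0 := (mul_eq_zero.mp g0).resolve_right hD
    have k1 := (mul_eq_zero.mp g1).resolve_right hD
    fin_cases j
    · exact k0
    · exact k1
  by_cases h0 : s 0 = 0
  · have h1' : s 1 ≠ 0 := by
      intro h
      apply hs
      ext i
      fin_cases i
      · exact h0
      · exact h
    refine ⟨w 1 / s 1, ?_⟩
    ext i
    fin_cases i
    · simp only [Fin.zero_eta, Pi.smul_apply, smul_eq_mul]
      field_simp
      linear_combination -hD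
    · simp only [Fin.mk_one, Pi.smul_apply, smul_eq_mul]
      field_simp
  · refine ⟨w 0 / s 0, ?_⟩
    ext i
    fin_cases i
    · simp only [Fin.zero_eta, Pi.smul_apply, smul_eq_mul]
      field_simp
    · simp only [Fin.mk_one, Pi.smul_apply, smul_eq_mul]
      field_simp
      linear_combination hD

/-- Let `M ∈ GL(2,F)` be non-scalar with unique eigenvalue `lam` (so `(M - lam·I)² = 0`),
with nonzero eigenvector `s`.  Then `v ↦ M v + z` fixes no affine line of `F²` if and
only if `lam = 1` and `z ∉ F • s`. -/
theorem one_eigenvalue_derangement_iff (q : ℕ) (hq : IsPrimePow q)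
    (F : Type*) [Field F] [Fintype F] (hF : Fintype.card F = q)
    (M : GL (Fin 2) F) (lam : F) (s : Fin 2 → F) (z : Fin 2 → F)
    (hnil : ((M : Matrix (Fin 2) (Fin 2) F) - lam • (1 : Matrix (Fin 2) (Fin 2) F)) ^ 2 = 0)
    (hns : (M : Matrix (Fin 2) (Fin 2) F) ≠ lam • (1 : Matrix (Fin 2) (Fin 2) F))
    (hs : s ≠ 0) (heig : (M : Matrix (Fin 2) (Fin 2) F).mulVec s = lam • s) :
    (∀ ℓ : Set (Fin 2 → F), IsAffineLine ℓ →
        (fun v => (M : Matrix (Fin 2) (Fin 2) F).mulVec v + z) '' ℓ ≠ ℓ) ↔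
      (lam = 1 ∧ ∀ c : F, z ≠ c • s) := by
  obtain ⟨N, hNdef⟩ : ∃ N, N = (M : Matrix (Fin 2) (Fin 2) F) - lam • 1 := ⟨_, rfl⟩
  have hM : ∀ v, (M : Matrix (Fin 2) (Fin 2) F).mulVec v = N.mulVec v + lam • v := by
    intro v
    rw [hNdef, Matrix.sub_mulVec, Matrix.smul_mulVec, Matrix.one_mulVec, sub_add_cancel]
  rw [← hNdef] at hnil
  have hN0 : N ≠ 0 := by
    rw [hNdef]
    exact sub_ne_zero.mpr hns
  have hNN : ∀ v, N.mulVec (N.mulVec v) = 0 := by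
    intro v
    rw [Matrix.mulVec_mulVec, ← pow_two, hnil, Matrix.zero_mulVec]
  have hNs : N.mulVec s = 0 := by
    have := hM s
    rw [heig] at this
    exact right_eq_add.mp this
  have hker : ∀ w, N.mulVec w = 0 → ∃ c : F, w = c • s :=
    fun w hw => ker_aux N hN0 s w hs hNs hw
  have hlam : lam ≠ 0 := by
    intro h
    apply hs
    rw [h, zero_smul] at heig
    have h2 : ((M⁻¹ : GL (Fin 2) F) : Matrix (Fin 2) (Fin 2) F).mulVec
        ((M : Matrix (Fin 2) (Fin 2) F).mulVec s) = s := by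
      rw [Matrix.mulVec_mulVec, ← Units.val_mul, inv_mul_cancel, Units.val_one, Matrix.one_mulVec]
    rw [← h2, heig, Matrix.mulVec_zero]
  constructor
  · intro h
    have key : ∀ u : Fin 2 → F, ∀ c : F,
        (M : Matrix (Fin 2) (Fin 2) F).mulVec u + z ≠ u + c • s := by
      intro u c hu
      apply h {p | ∃ t : F, p = u + t • s} ⟨u, s, hs, rfl⟩
      have hf : ∀ t : F, (M : Matrix (Fin 2) (Fin 2) F).mulVec (u + t • s) + z
          = u + (c + t * lam) • s := by
        intro t
        rw [Matrix.mulVec_add, Matrix.mulVec_smul, heig, add_right_comm, hu]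
        module
      ext p
      constructor
      · rintro ⟨v, ⟨t, rfl⟩, rfl⟩
        exact ⟨_, hf t⟩
      · rintro ⟨t, rfl⟩
        refine ⟨u + ((t - c) / lam) • s, ⟨_, rfl⟩, ?_⟩
        refine (hf _).trans ?_
        rw [div_mul_cancel₀ _ hlam, add_sub_cancel]
    have h1 : lam = 1 := by
      by_contra hne
      have hne' : 1 - lam ≠ 0 := sub_ne_zero.mpr (Ne.symm hne)
      obtain ⟨c, hc⟩ := hker _ (hNN ((1 - lam)⁻¹ • z))
      apply key ((1 - lam)⁻¹ • z) c
      have hz : (1 - lam) • ((1 - lam)⁻¹ • z) = z := smul_inv_smul₀ hne' z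
      rw [hM, hc]
      nth_rewrite 2 [← hz]
      module
    refine ⟨h1, fun c hc => key 0 c ?_⟩
    rw [Matrix.mulVec_zero, hc]
  · rintro ⟨rfl, hz⟩ ℓ ⟨u, w, hw, rfl⟩ himg
    have hmem : ∀ t : F, ∃ a : F,
        (M : Matrix (Fin 2) (Fin 2) F).mulVec (u + t • w) + z = u + a • w := by
      intro t
      have : (M : Matrix (Fin 2) (Fin 2) F).mulVec (u + t • w) + z ∈
          {p | ∃ t : F, p = u + t • w} := by
        rw [← himg]
        exact ⟨_, ⟨t, rfl⟩, rfl⟩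
      exact this
    obtain ⟨a, ha⟩ := hmem 0
    obtain ⟨b, hb⟩ := hmem 1
    rw [zero_smul, add_zero, hM] at ha
    rw [one_smul, hM, Matrix.mulVec_add] at hb
    have hNw : N.mulVec w = (b - a - 1) • w := by
      have h := congrArg₂ (· - ·) hb ha
      rw [← sub_eq_zero] at h ⊢
      rw [← h]
      module
    have h2 := hNN w
    rw [hNw, Matrix.mulVec_smul, hNw, smul_smul] at h2
    have h3 : b - a - 1 = 0 := by
      rcases smul_eq_zero.mp h2 with h | h
      · exact mul_self_eq_zero.mp h
      · exact absurd h hw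
    rw [h3, zero_smul] at hNw
    obtain ⟨k, hk⟩ := hker w hNw
    obtain ⟨c, hc⟩ := hker _ (hNN u)
    apply hz (a * k - c)
    rw [hc, hk] at ha
    rw [← sub_eq_zero] at ha ⊢
    rw [← ha]
    module
end

section
/- Let q be a prime power and F a finite field with q elements. For c ∈ F \ {0} and z ∈ F², let f_{c,z} : F² → F² be the affine map f_{c,z}(v) = c•v + z. Then every f_{c,z} fixes some affine line of F², and consequently the set T = {f_{c,z} : c ∈ F \ {0}, z ∈ F²}, which has size q²(q−1), is an intersecting set for the action of AGL(2,F) on affine lines: for any two elements f, g of T there is an affine line ℓ with f(ℓ) = g(ℓ). -/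
theorem exists_fixed_line {F : Type*} [Field F] (c : F) (hc : c ≠ 0) (z : Fin 2 → F) :
    ∃ ℓ : Set (Fin 2 → F), IsAffineLine ℓ ∧ (fun v => c • v + z) '' ℓ = ℓ := by
  have key : ∃ u w : Fin 2 → F, w ≠ 0 ∧ ∃ s : F, c • u + z = u + s • w := by
    have h1 : (fun _ => 1 : Fin 2 → F) ≠ 0 := fun h => one_ne_zero (congrFun h 0)
    by_cases h : c = 1
    · by_cases hz : z = 0
      · exact ⟨0, fun _ => 1, h1, 0, by simp [hz]⟩
      · exact ⟨0, z, hz, 1, by simp⟩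
    · have h' : 1 - c ≠ 0 := sub_ne_zero.mpr (Ne.symm h)
      refine ⟨(1 - c)⁻¹ • z, fun _ => 1, h1, 0, ?_⟩
      ext i
      simp only [Pi.add_apply, Pi.smul_apply, smul_eq_mul]
      field_simp
      ring
  obtain ⟨u, w, hw, s, hs⟩ := key
  refine ⟨{p | ∃ t : F, p = u + t • w}, ⟨u, w, hw, rfl⟩, ?_⟩
  have himg : ∀ t : F, c • (u + t • w) + z = u + (s + c * t) • w := by
    intro t
    have : c • (u + t • w) + z = (c • u + z) + (c * t) • w := by module
    rw [this, hs]
    module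
  ext p
  constructor
  · rintro ⟨v, ⟨t, rfl⟩, rfl⟩
    exact ⟨_, himg t⟩
  · rintro ⟨t, rfl⟩
    refine ⟨u + (c⁻¹ * (t - s)) • w, ⟨_, rfl⟩, ?_⟩
    simp only [himg]
    rw [mul_inv_cancel_left₀ hc]
    simp

/-- Every map `v ↦ c • v + z` (with `c ≠ 0`) fixes an affine line, and the set of all
such maps, of size `q²(q-1)`, is an intersecting set for the action of `AGL(2,F)` on
affine lines. -/
theorem block_stabilizer_intersecting (q : ℕ) (hq : IsPrimePow q)
    (F : Type*) [Field F] [Fintype F] (hF : Fintype.card F = q) :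
    (∀ c : F, c ≠ 0 → ∀ z : Fin 2 → F, ∃ ℓ : Set (Fin 2 → F), IsAffineLine ℓ ∧
      (fun v => c • v + z) '' ℓ = ℓ) ∧
    {f : (Fin 2 → F) → (Fin 2 → F) |
      ∃ (c : F) (z : Fin 2 → F), c ≠ 0 ∧ f = fun v => c • v + z}.ncard = q ^ 2 * (q - 1) ∧
    (∀ f ∈ {f : (Fin 2 → F) → (Fin 2 → F) |
        ∃ (c : F) (z : Fin 2 → F), c ≠ 0 ∧ f = fun v => c • v + z},
      ∀ g ∈ {f : (Fin 2 → F) → (Fin 2 → F) |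
        ∃ (c : F) (z : Fin 2 → F), c ≠ 0 ∧ f = fun v => c • v + z},
        ∃ ℓ : Set (Fin 2 → F), IsAffineLine ℓ ∧ f '' ℓ = g '' ℓ) := by
  refine ⟨fun c hc z => exists_fixed_line c hc z, ?_, ?_⟩
  · have hset : {f : (Fin 2 → F) → (Fin 2 → F) |
        ∃ (c : F) (z : Fin 2 → F), c ≠ 0 ∧ f = fun v => c • v + z} =
        Set.range (fun (x : Fˣ × (Fin 2 → F)) (v : Fin 2 → F) => (x.1 : F) • v + x.2) := by
      ext f
      constructor
      · rintro ⟨c, z, hc, rfl⟩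
        exact ⟨(Units.mk0 c hc, z), rfl⟩
      · rintro ⟨⟨c, z⟩, rfl⟩
        exact ⟨c, z, c.ne_zero, rfl⟩
    have hinj : Function.Injective
        (fun (x : Fˣ × (Fin 2 → F)) (v : Fin 2 → F) => (x.1 : F) • v + x.2) := by
      rintro ⟨c, z⟩ ⟨d, y⟩ h
      have hz : z = y := by simpa using congrFun h 0
      subst hz
      have h2 := congrFun (congrFun h (fun _ => 1)) 0
      have hcd : (c : F) = d := by simpa using h2
      rw [Units.ext hcd]
    classical
    rw [hset, ← Set.image_univ, Set.ncard_image_of_injective _ hinj, Set.ncard_univ,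
      Nat.card_prod, Nat.card_units, Nat.card_fun]
    simp [hF, mul_comm]
  · rintro f ⟨c, z, hc, rfl⟩ g ⟨d, y, hd, rfl⟩
    obtain ⟨ℓ, hℓ, hfix⟩ := exists_fixed_line (d⁻¹ * c) (mul_ne_zero (inv_ne_zero hd) hc)
      (d⁻¹ • (z - y))
    refine ⟨ℓ, hℓ, ?_⟩
    conv_rhs => rw [← hfix, Set.image_image]
    congr 1
    ext v i
    simp only [Pi.add_apply, Pi.smul_apply, Pi.sub_apply, smul_eq_mul]
    field_simp
    ring
end

section
/- Let q be a prime power and F a finite field with q elements. Let S ⊆ GL(2,F) be such that for all M, N ∈ S the matrix N⁻¹M has two linearly independent eigenvectors in F². Then the set T = {v ↦ c•(M v) + z : M ∈ S, c ∈ F \ {0}, z ∈ F²} of affine maps is an intersecting set for the action of AGL(2,F) on affine lines: for any two elements f, g of T there exists an affine line ℓ of F² with f(ℓ) = g(ℓ). -/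
/-- Affine maps with diagonalizable linear part `P` fix a line. -/
lemma exists_fixed_line_s15 {F : Type*} [Field F] (P : (Fin 2 → F) →ₗ[F] (Fin 2 → F))
    (v₁ v₂ s : Fin 2 → F) (l₁ l₂ : F) (hv : LinearIndependent F ![v₁, v₂])
    (h₁ : P v₁ = l₁ • v₁) (h₂ : P v₂ = l₂ • v₂) :
    ∃ (u w : Fin 2 → F) (l k : F), w ≠ 0 ∧ P w = l • w ∧ P u + s = u + k • w := by
  have hv1 : v₁ ≠ 0 := hv.ne_zero 0
  have hv2 : v₂ ≠ 0 := hv.ne_zero 1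
  have hspan := hv.span_eq_top_of_card_eq_finrank (by simp)
  have hs : s ∈ Submodule.span F (Set.range ![v₁, v₂]) := by rw [hspan]; trivial
  rw [Matrix.range_cons, Matrix.range_cons, Matrix.range_empty, Set.union_empty,
    Set.singleton_union, Submodule.mem_span_pair] at hs
  obtain ⟨a, b, rfl⟩ := hs
  by_cases e2 : l₂ = 1
  · by_cases e1 : l₁ = 1
    · subst e1 e2
      by_cases h0 : a • v₁ + b • v₂ = 0
      · exact ⟨0, v₁, 1, 0, hv1, h₁, by simp [h0]⟩
      · exact ⟨0, a • v₁ + b • v₂, 1, 1, h0, by simp [h₁, h₂], by simp⟩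
    · have : 1 - l₁ ≠ 0 := sub_ne_zero.mpr (Ne.symm e1)
      refine ⟨(a / (1 - l₁)) • v₁, v₂, l₂, b, hv2, h₂, ?_⟩
      rw [map_smul, h₁]
      ext i
      simp only [Pi.add_apply, Pi.smul_apply, smul_eq_mul]
      field_simp
      ring
  · have : 1 - l₂ ≠ 0 := sub_ne_zero.mpr (Ne.symm e2)
    refine ⟨(b / (1 - l₂)) • v₂, v₁, l₁, a, hv1, h₁, ?_⟩
    rw [map_smul, h₂]
    ext i
    simp only [Pi.add_apply, Pi.smul_apply, smul_eq_mul]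
    field_simp
    ring

/-- If `S ⊆ GL(2,F)` is such that `N⁻¹ M` has two linearly independent eigenvectors for
all `M, N ∈ S`, then the set of affine maps `v ↦ c • (M v) + z` with `M ∈ S`, `c ≠ 0`,
is an intersecting set for the action of `AGL(2,F)` on affine lines. -/
theorem cosets_of_two_intersecting_set_intersecting (q : ℕ) (hq : IsPrimePow q)
    (F : Type*) [Field F] [Fintype F] (hF : Fintype.card F = q)
    (S : Set (GL (Fin 2) F))
    (hS : ∀ M ∈ S, ∀ N ∈ S, ∃ (v₁ v₂ : Fin 2 → F) (c₁ c₂ : F),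
      LinearIndependent F ![v₁, v₂] ∧
      ((N⁻¹ * M : GL (Fin 2) F) : Matrix (Fin 2) (Fin 2) F).mulVec v₁ = c₁ • v₁ ∧
      ((N⁻¹ * M : GL (Fin 2) F) : Matrix (Fin 2) (Fin 2) F).mulVec v₂ = c₂ • v₂) :
    ∀ f ∈ {f : (Fin 2 → F) → (Fin 2 → F) | ∃ M ∈ S, ∃ (c : F) (z : Fin 2 → F),
        c ≠ 0 ∧ f = fun v => c • ((M : Matrix (Fin 2) (Fin 2) F).mulVec v) + z},
      ∀ g ∈ {f : (Fin 2 → F) → (Fin 2 → F) | ∃ M ∈ S, ∃ (c : F) (z : Fin 2 → F),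
        c ≠ 0 ∧ f = fun v => c • ((M : Matrix (Fin 2) (Fin 2) F).mulVec v) + z},
        ∃ ℓ : Set (Fin 2 → F), IsAffineLine ℓ ∧ f '' ℓ = g '' ℓ := by
  rintro f ⟨M, hM, c, z, hc, rfl⟩ g ⟨N, hN, d, y, hd, rfl⟩
  obtain ⟨v₁, v₂, c₁, c₂, hv, h₁, h₂⟩ := hS M hM N hN
  set A : Matrix (Fin 2) (Fin 2) F := ((N⁻¹ * M : GL (Fin 2) F) : Matrix (Fin 2) (Fin 2) F) with hA
  have hNA : (N : Matrix (Fin 2) (Fin 2) F) * A = M := by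
    rw [hA, ← Units.val_mul, mul_inv_cancel_left]
  have hNN : (N : Matrix (Fin 2) (Fin 2) F) * ((N⁻¹ : GL (Fin 2) F) : Matrix (Fin 2) (Fin 2) F)
      = 1 := by
    rw [← Units.val_mul, mul_inv_cancel, Units.val_one]
  obtain ⟨u, w, l, k, hw, hPw, hPu⟩ := exists_fixed_line_s15 ((c / d) • Matrix.mulVecLin A) v₁ v₂
    (d⁻¹ • ((N⁻¹ : GL (Fin 2) F) : Matrix (Fin 2) (Fin 2) F).mulVec (z - y))
    ((c / d) * c₁) ((c / d) * c₂) hv (by simp [h₁, mul_smul]) (by simp [h₂, mul_smul])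
  simp only [LinearMap.smul_apply, Matrix.mulVecLin_apply] at hPw hPu
  have hcd : d * (c / d) = c := by field_simp
  -- apply `d N` to both equations
  have ew : c • (M : Matrix (Fin 2) (Fin 2) F).mulVec w
      = (l * d) • (N : Matrix (Fin 2) (Fin 2) F).mulVec w := by
    have := congrArg (fun x => d • (N : Matrix (Fin 2) (Fin 2) F).mulVec x) hPw
    simp only [Matrix.mulVec_smul, Matrix.mulVec_mulVec, hNA, smul_smul, hcd] at this
    rw [this, mul_comm]
  have eu : c • (M : Matrix (Fin 2) (Fin 2) F).mulVec u + (z - y)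
      = d • (N : Matrix (Fin 2) (Fin 2) F).mulVec u
        + (d * k) • (N : Matrix (Fin 2) (Fin 2) F).mulVec w := by
    have := congrArg (fun x => d • (N : Matrix (Fin 2) (Fin 2) F).mulVec x) hPu
    simp only [Matrix.mulVec_add, Matrix.mulVec_smul, Matrix.mulVec_mulVec, hNA, hNN,
      Matrix.one_mulVec, smul_add, smul_smul, hcd, mul_inv_cancel₀ hd, one_smul] at this
    exact this
  have key : ∀ t : F, c • (M : Matrix (Fin 2) (Fin 2) F).mulVec (u + t • w) + z
      = d • (N : Matrix (Fin 2) (Fin 2) F).mulVec (u + (k + l * t) • w) + y := by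
    intro t
    simp only [Matrix.mulVec_add, Matrix.mulVec_smul, smul_add]
    ext i
    have ew' := congrFun ew i
    have eu' := congrFun eu i
    simp only [Pi.add_apply, Pi.sub_apply, Pi.smul_apply, smul_eq_mul] at ew' eu' ⊢
    linear_combination eu' + t * ew'
  have hl : l ≠ 0 := by
    rintro rfl
    rw [zero_mul, zero_smul, smul_eq_zero] at ew
    have hMw := ew.resolve_left hc
    apply hw
    have hMM : ((M⁻¹ : GL (Fin 2) F) : Matrix (Fin 2) (Fin 2) F) * (M : Matrix (Fin 2) (Fin 2) F)
        = 1 := by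
      rw [← Units.val_mul, inv_mul_cancel, Units.val_one]
    rw [← Matrix.one_mulVec w, ← hMM, ← Matrix.mulVec_mulVec, hMw, Matrix.mulVec_zero]
  refine ⟨{p | ∃ t : F, p = u + t • w}, ⟨u, w, hw, rfl⟩, ?_⟩
  apply Set.Subset.antisymm
  · rintro _ ⟨_, ⟨t, rfl⟩, rfl⟩
    exact ⟨_, ⟨k + l * t, rfl⟩, (key t).symm⟩
  · rintro _ ⟨_, ⟨t, rfl⟩, rfl⟩
    refine ⟨_, ⟨(t - k) / l, rfl⟩, ?_⟩
    have := key ((t - k) / l)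
    rw [mul_div_cancel₀ _ hl, add_sub_cancel] at this
    exact this
end

section
/- Let q be a prime power and F a finite field with q elements. If q is odd, there exists a set S ⊆ GL(2,F) of size (3q−5)/2 such that no two distinct elements of S are scalar multiples of one another and, for all M, N ∈ S, the matrix N⁻¹M has two linearly independent eigenvectors in F² (equivalently, the images of M and N in PGL(2,q) agree on at least two points of the projective line, so S projects to a 2-intersecting set in PGL(2,q) of size (3q−5)/2). If q is even, such a set exists with size (3q−4)/2. -/
namespace PGLTwo

variable {F : Type*} [Field F]

/-- The matrix entries: `a` on one of the vectors `e₁, e₂, e₁+e₂`, `1` on the cyclically next. -/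
def mat (i : Fin 3) (a : F) : Matrix (Fin 2) (Fin 2) F :=
  ![!![a, 0; 0, 1], !![1, 0; 1 - a, a], !![1, a - 1; 0, a]] i

theorem mat_det (i : Fin 3) (a : F) : (mat i a).det = a := by
  fin_cases i <;> simp [mat, Matrix.det_fin_two]

/-- The corresponding element of `GL`. -/
noncomputable def gl (p : Fin 3 × Fˣ) : GL (Fin 2) F :=
  Matrix.GeneralLinearGroup.mkOfDetNeZero (mat p.1 p.2.1) (by rw [mat_det]; exact p.2.ne_zero)

theorem gl_coe (p : Fin 3 × Fˣ) : (gl p : Matrix (Fin 2) (Fin 2) F) = mat p.1 p.2.1 := rfl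

/-- Two independent generalized eigenvectors of a pair of matrices. -/
def Rel (M N : Matrix (Fin 2) (Fin 2) F) : Prop :=
  ∃ (v₁ v₂ : Fin 2 → F) (c₁ c₂ : F), c₁ ≠ 0 ∧ c₂ ≠ 0 ∧ v₁ 0 * v₂ 1 - v₁ 1 * v₂ 0 ≠ 0 ∧
    M.mulVec v₁ = c₁ • N.mulVec v₁ ∧ M.mulVec v₂ = c₂ • N.mulVec v₂

theorem Rel.symm {M N : Matrix (Fin 2) (Fin 2) F} (h : Rel M N) : Rel N M := by
  obtain ⟨v₁, v₂, c₁, c₂, h1, h2, hd, e1, e2⟩ := h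
  refine ⟨v₁, v₂, c₁⁻¹, c₂⁻¹, inv_ne_zero h1, inv_ne_zero h2, hd, ?_, ?_⟩
  · rw [e1, smul_smul, inv_mul_cancel₀ h1, one_smul]
  · rw [e2, smul_smul, inv_mul_cancel₀ h2, one_smul]

theorem Rel.eig {M N : GL (Fin 2) F} (h : Rel (M : Matrix (Fin 2) (Fin 2) F) N) :
    ∃ (v₁ v₂ : Fin 2 → F) (c₁ c₂ : F),
        LinearIndependent F ![v₁, v₂] ∧
        ((N⁻¹ * M : GL (Fin 2) F) : Matrix (Fin 2) (Fin 2) F).mulVec v₁ = c₁ • v₁ ∧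
        ((N⁻¹ * M : GL (Fin 2) F) : Matrix (Fin 2) (Fin 2) F).mulVec v₂ = c₂ • v₂ := by
  obtain ⟨v₁, v₂, c₁, c₂, h1, h2, hd, e1, e2⟩ := h
  have key : ∀ (v : Fin 2 → F) (c : F),
      (M : Matrix (Fin 2) (Fin 2) F).mulVec v = c • (N : Matrix (Fin 2) (Fin 2) F).mulVec v →
      ((N⁻¹ * M : GL (Fin 2) F) : Matrix (Fin 2) (Fin 2) F).mulVec v = c • v := by
    intro v c e
    rw [Units.val_mul, ← Matrix.mulVec_mulVec, e, Matrix.mulVec_smul, Matrix.mulVec_mulVec,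
      Units.inv_mul, Matrix.one_mulVec]
  refine ⟨v₁, v₂, c₁, c₂, ?_, key _ _ e1, key _ _ e2⟩
  rw [LinearIndependent.pair_iff]
  intro s t hst
  have k0 := congrFun hst 0
  have k1 := congrFun hst 1
  simp only [Pi.add_apply, Pi.smul_apply, smul_eq_mul, Pi.zero_apply] at k0 k1
  constructor
  · apply (mul_eq_zero.mp (_ : s * (v₁ 0 * v₂ 1 - v₁ 1 * v₂ 0) = 0)).resolve_right hd
    linear_combination v₂ 1 * k0 - v₂ 0 * k1
  · apply (mul_eq_zero.mp (_ : t * (v₁ 0 * v₂ 1 - v₁ 1 * v₂ 0) = 0)).resolve_right hd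
    linear_combination v₁ 0 * k1 - v₁ 1 * k0

theorem rel_same (i : Fin 3) {a b : F} (ha : a ≠ 0) (hb : b ≠ 0) : Rel (mat i a) (mat i b) := by
  refine ⟨![![1, 0], ![0, 1], ![1, 1]] i, ![![0, 1], ![1, 1], ![1, 0]] i, a / b, 1,
    div_ne_zero ha hb, one_ne_zero, ?_, ?_, ?_⟩
  · fin_cases i <;> simp
  · fin_cases i <;> ext j <;> fin_cases j <;> simp [mat, Matrix.mulVec, dotProduct, hb]
  · fin_cases i <;> ext j <;> fin_cases j <;> simp [mat, Matrix.mulVec, dotProduct]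

theorem rel_next (i : Fin 3) {a b : F} (ha : a ≠ 0) (hb : b ≠ 0) (hab : a * b ≠ 1) :
    Rel (mat i a) (mat (i + 1) b) := by
  have hab' : 1 - a * b ≠ 0 := sub_ne_zero.mpr hab.symm
  refine ⟨![![0, 1], ![1, 1], ![1, 0]] i,
    ![![1 - a * b, a * (1 - b)], ![a * (b - 1), 1 - a], ![1 - a, 1 - a * b]] i, b⁻¹, a,
    inv_ne_zero hb, ha, ?_, ?_, ?_⟩
  · fin_cases i
    · simpa [sub_eq_zero] using hab
    · have : (1 : F) * (1 - a) - 1 * (a * (b - 1)) ≠ 0 := by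
        convert hab' using 1; ring
      simpa using this
    · simpa using hab'
  · fin_cases i <;> ext j <;> fin_cases j <;> simp [mat, Matrix.mulVec, dotProduct, hb]
  · fin_cases i <;> ext j <;> fin_cases j <;> simp [mat, Matrix.mulVec, dotProduct] <;> ring_nf <;> simp

theorem rel_all {i j : Fin 3} {a b : F} (ha : a ≠ 0) (hb : b ≠ 0) (hab : i ≠ j → a * b ≠ 1) :
    Rel (mat i a) (mat j b) := by
  by_cases hij : i = j
  · subst hij; exact rel_same i ha hb
  · have h := hab hij
    have h' : b * a ≠ 1 := by rwa [mul_comm]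
    have : j = i + 1 ∨ i = j + 1 := by
      clear hab; revert hij; revert i j; decide
    rcases this with rfl | rfl
    · exact rel_next i ha hb h
    · exact (rel_next j hb ha h').symm

theorem nonprop {i j : Fin 3} {a b c : F} (ha : a ≠ 0)
    (hi : i ≠ 0 → a ≠ 1) (hj : j ≠ 0 → b ≠ 1) (h : mat i a = c • mat j b) : i = j ∧ a = b := by
  have h00 := congrFun (congrFun h 0) 0
  have h01 := congrFun (congrFun h 0) 1
  have h10 := congrFun (congrFun h 1) 0
  have h11 := congrFun (congrFun h 1) 1
  clear h
  fin_cases i <;> fin_cases j <;> simp [mat] at * <;> grind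

theorem exists_half [Fintype F] [DecidableEq F] : ∃ A : Finset Fˣ, (∀ a ∈ A, ∀ b ∈ A, a * b ≠ 1) ∧
    2 * A.card + ({1, -1} : Finset Fˣ).card + 1 = Fintype.card F := by
  classical
  let e := Fintype.equivFin Fˣ
  let A : Finset Fˣ := Finset.univ.filter fun u => e u < e u⁻¹
  let B : Finset Fˣ := Finset.univ.filter fun u => e u⁻¹ < e u
  refine ⟨A, ?_, ?_⟩
  · intro a ha b hb hab
    have : b = a⁻¹ := (inv_eq_of_mul_eq_one_right hab).symm
    subst this
    simp only [A, Finset.mem_filter, Finset.mem_univ, true_and, inv_inv] at ha hb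
    exact lt_asymm ha hb
  · have hB : B.card = A.card := by
      apply Finset.card_bij (fun u _ => u⁻¹)
      · intro u hu; simpa [A, B] using hu
      · intro u _ v _ h; simpa using h
      · intro u hu; exact ⟨u⁻¹, by simpa [A, B] using hu, by simp⟩
    have hpm : ∀ u : Fˣ, u = 1 ∨ u = -1 ↔ u = u⁻¹ := by
      intro u
      rw [eq_inv_iff_mul_eq_one, ← Units.val_inj, ← Units.val_inj, ← Units.val_inj]
      simp [mul_self_eq_one_iff]
    have hdAB : Disjoint A B := by
      rw [Finset.disjoint_left]; intro u h1 h2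
      simp only [A, B, Finset.mem_filter, Finset.mem_univ, true_and] at h1 h2
      exact lt_asymm h1 h2
    have hd2 : Disjoint (A ∪ B) ({1, -1} : Finset Fˣ) := by
      rw [Finset.disjoint_left]; intro u h1 h2
      rw [Finset.mem_insert, Finset.mem_singleton, hpm] at h2
      simp only [A, B, Finset.mem_union, Finset.mem_filter, Finset.mem_univ, true_and, ← h2,
        lt_irrefl, or_self] at h1
    have hU : (A ∪ B) ∪ ({1, -1} : Finset Fˣ) = Finset.univ := by
      ext u
      simp only [A, B, Finset.mem_union, Finset.mem_filter, Finset.mem_univ, true_and,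
        Finset.mem_insert, Finset.mem_singleton, hpm, iff_true]
      rcases lt_trichotomy (e u) (e u⁻¹) with h | h | h
      · exact Or.inl (Or.inl h)
      · exact Or.inr (e.injective h)
      · exact Or.inl (Or.inr h)
    have hc := congrArg Finset.card hU
    rw [Finset.card_union_of_disjoint hd2, Finset.card_union_of_disjoint hdAB, hB,
      Finset.card_univ, Fintype.card_units] at hc
    have := Fintype.card_pos (α := F)
    omega

theorem main [Fintype F] [DecidableEq F] : ∃ S : Set (GL (Fin 2) F),
      (∀ M ∈ S, ∀ N ∈ S, M ≠ N → ∀ c : F,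
        (M : Matrix (Fin 2) (Fin 2) F) ≠ c • (N : Matrix (Fin 2) (Fin 2) F)) ∧
      (∀ M ∈ S, ∀ N ∈ S, ∃ (v₁ v₂ : Fin 2 → F) (c₁ c₂ : F),
        LinearIndependent F ![v₁, v₂] ∧
        ((N⁻¹ * M : GL (Fin 2) F) : Matrix (Fin 2) (Fin 2) F).mulVec v₁ = c₁ • v₁ ∧
        ((N⁻¹ * M : GL (Fin 2) F) : Matrix (Fin 2) (Fin 2) F).mulVec v₂ = c₂ • v₂) ∧
      2 * S.ncard + 3 = 3 * Fintype.card F - ({1, -1} : Finset Fˣ).card := by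
  classical
  obtain ⟨A, hA, hc⟩ := exists_half (F := F)
  have h1 : (1 : Fˣ) ∉ A := fun h => hA 1 h 1 h (by simp)
  have h2 : (-1 : Fˣ) ∉ A := fun h => hA _ h _ h (by simp)
  have hne : ∀ u ∈ A, u ≠ 1 := fun u hu h => h1 (h ▸ hu)
  have hne2 : ∀ u ∈ A, u ≠ -1 := fun u hu h => h2 (h ▸ hu)
  have hd : Disjoint A ({1, -1} : Finset Fˣ) := by
    rw [Finset.disjoint_left]; intro u hu h
    simp only [Finset.mem_insert, Finset.mem_singleton] at h
    exact h.elim (hne u hu) (hne2 u hu)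
  let T : Finset (Fin 3 × Fˣ) := ({0} ×ˢ (A ∪ {1, -1})) ∪ ({1, 2} ×ˢ A)
  have hTc : T.card = 3 * A.card + ({1, -1} : Finset Fˣ).card := by
    have : Disjoint (({0} : Finset (Fin 3)) ×ˢ (A ∪ {1, -1})) (({1, 2} : Finset (Fin 3)) ×ˢ A) := by
      apply Finset.disjoint_product.mpr
      left; decide
    have h12 : ({1, 2} : Finset (Fin 3)).card = 2 := rfl
    simp only [T]
    rw [Finset.card_union_of_disjoint this, Finset.card_product, Finset.card_product,
      Finset.card_union_of_disjoint hd, h12, Finset.card_singleton]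
    ring
  have hT : ∀ p ∈ T, (p.1 ≠ 0 ∧ p.2 ∈ A) ∨ (p.1 = 0 ∧ (p.2 ∈ A ∨ p.2 = 1 ∨ p.2 = -1)) := by
    rintro ⟨i, u⟩ hp
    simp only [T, Finset.mem_union, Finset.mem_product, Finset.mem_insert,
      Finset.mem_singleton] at hp
    rcases hp with ⟨h, h'⟩ | ⟨h, h'⟩
    · exact Or.inr ⟨h, h'⟩
    · refine Or.inl ⟨?_, h'⟩
      rcases h with h | h <;> simp [h]
  have hT1 : ∀ p ∈ T, p.1 ≠ 0 → (p.2 : F) ≠ 1 := by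
    intro p hp h0 h
    rcases hT p hp with h' | h'
    · exact hne _ h'.2 (Units.ext h)
    · exact h0 h'.1
  have aux : ∀ u ∈ A, ∀ v : Fˣ, (v ∈ A ∨ v = 1 ∨ v = -1) → u * v ≠ 1 := by
    rintro u hu v (hv | rfl | rfl)
    · exact hA u hu v hv
    · simpa using hne u hu
    · intro h
      apply hne2 u hu
      rw [mul_neg, mul_one] at h
      rw [← h, neg_neg]
  have hT2 : ∀ p ∈ T, ∀ r ∈ T, p.1 ≠ r.1 → (p.2 : F) * r.2 ≠ 1 := by
    intro p hp r hr hpr h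
    have h' : p.2 * r.2 = 1 := Units.ext (by simpa using h)
    rcases hT p hp with ⟨_, h1⟩ | ⟨h0, h1⟩ <;> rcases hT r hr with ⟨_, h2⟩ | ⟨h3, h2⟩
    · exact aux _ h1 _ (Or.inl h2) h'
    · exact aux _ h1 _ h2 h'
    · exact aux _ h2 _ h1 (by rwa [mul_comm])
    · exact hpr (h0.trans h3.symm)
  have hprop : ∀ p ∈ T, ∀ r ∈ T, ∀ c : F,
      (gl p : Matrix (Fin 2) (Fin 2) F) = c • (gl r : Matrix (Fin 2) (Fin 2) F) → p = r := by
    intro p hp r hr c h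
    obtain ⟨h1, h2⟩ := nonprop p.2.ne_zero (hT1 p hp) (hT1 r hr) h
    exact Prod.ext h1 (Units.ext h2)
  refine ⟨gl '' (T : Set (Fin 3 × Fˣ)), ?_, ?_, ?_⟩
  · rintro _ ⟨p, hp, rfl⟩ _ ⟨r, hr, rfl⟩ hne c h
    exact hne (congrArg gl (hprop p hp r hr c h))
  · rintro _ ⟨p, hp, rfl⟩ _ ⟨r, hr, rfl⟩
    exact (rel_all p.2.ne_zero r.2.ne_zero (hT2 p hp r hr)).eig
  · rw [Set.ncard_image_of_injOn, Set.ncard_coe_finset, hTc]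
    · omega
    · intro p hp r hr h
      exact hprop p hp r hr 1 (by rw [h, one_smul])

end PGLTwo

/-- **2-intersecting sets in PGL(2,q) (Theorem 5.8).**  There is a set `S ⊆ GL(2,F)` of
pairwise non-proportional matrices such that `N⁻¹ M` has two linearly independent
eigenvectors for all `M, N ∈ S` (so `S` projects to a 2-intersecting set in `PGL(2,q)`),
of size `(3q-5)/2` when `q` is odd and `(3q-4)/2` when `q` is even. -/
theorem pgl2_two_intersecting_construction (q : ℕ) (hq : IsPrimePow q)
    (F : Type*) [Field F] [Fintype F] (hF : Fintype.card F = q) :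
    (Odd q → ∃ S : Set (GL (Fin 2) F),
      (∀ M ∈ S, ∀ N ∈ S, M ≠ N → ∀ c : F,
        (M : Matrix (Fin 2) (Fin 2) F) ≠ c • (N : Matrix (Fin 2) (Fin 2) F)) ∧
      (∀ M ∈ S, ∀ N ∈ S, ∃ (v₁ v₂ : Fin 2 → F) (c₁ c₂ : F),
        LinearIndependent F ![v₁, v₂] ∧
        ((N⁻¹ * M : GL (Fin 2) F) : Matrix (Fin 2) (Fin 2) F).mulVec v₁ = c₁ • v₁ ∧
        ((N⁻¹ * M : GL (Fin 2) F) : Matrix (Fin 2) (Fin 2) F).mulVec v₂ = c₂ • v₂) ∧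
      2 * S.ncard = 3 * q - 5) ∧
    (Even q → ∃ S : Set (GL (Fin 2) F),
      (∀ M ∈ S, ∀ N ∈ S, M ≠ N → ∀ c : F,
        (M : Matrix (Fin 2) (Fin 2) F) ≠ c • (N : Matrix (Fin 2) (Fin 2) F)) ∧
      (∀ M ∈ S, ∀ N ∈ S, ∃ (v₁ v₂ : Fin 2 → F) (c₁ c₂ : F),
        LinearIndependent F ![v₁, v₂] ∧
        ((N⁻¹ * M : GL (Fin 2) F) : Matrix (Fin 2) (Fin 2) F).mulVec v₁ = c₁ • v₁ ∧
        ((N⁻¹ * M : GL (Fin 2) F) : Matrix (Fin 2) (Fin 2) F).mulVec v₂ = c₂ • v₂) ∧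
      2 * S.ncard = 3 * q - 4) := by
  classical
  obtain ⟨S, hS1, hS2, hS3⟩ := PGLTwo.main (F := F)
  rw [hF] at hS3
  constructor
  · intro ho
    refine ⟨S, hS1, hS2, ?_⟩
    have h2 : ringChar F ≠ 2 := by
      intro h
      have := FiniteField.even_card_iff_char_two.mp h
      rw [hF] at this
      rw [Nat.odd_iff] at ho
      omega
    have hne : (1 : Fˣ) ≠ -1 := by
      intro h
      exact Ring.neg_one_ne_one_of_char_ne_two h2 (by simpa using (congrArg Units.val h).symm)
    rw [Finset.card_pair hne] at hS3
    omega
  · intro he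
    refine ⟨S, hS1, hS2, ?_⟩
    have h2 : ringChar F = 2 := by
      apply FiniteField.even_card_iff_char_two.mpr
      rw [hF]
      exact Nat.even_iff.mp he
    have : CharP F 2 := h2 ▸ ringChar.charP F
    have hne : (-1 : Fˣ) = 1 := Units.ext (by simp [CharTwo.neg_eq])
    rw [hne, Finset.pair_eq_singleton, Finset.card_singleton] at hS3
    omega
end

section
/- Let q be a prime power and F a finite field with q elements. If q is odd, there exists an intersecting set of affine maps in AGL(2,F), for the action on the affine lines of F², of size q²(q−1)(3q−5)/2. If q is even, there exists such an intersecting set of size q²(q−1)(3q−4)/2. In particular, for q ≥ 4 these sets are larger than the stabilizer of a line, which has size q²(q−1)², so AGL(2,q) acting on lines does not have the EKR property. -/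
open Matrix in
/-- Two affine maps `x ↦ M x + z`, `x ↦ N x + z'` send a common line to the same line as soon as
a non-zero functional relates them. -/
lemma agl_meet_of_functional {F : Type*} [Field F] (M N : Matrix (Fin 2) (Fin 2) F)
    (hM : M.det ≠ 0) (hN : N.det ≠ 0) (z z' : Fin 2 → F) (a : Fin 2 → F) (ha : a ≠ 0)
    (l c : F) (hl : l ≠ 0) (h1 : a ᵥ* N = l • (a ᵥ* M))
    (h2 : a ⬝ᵥ z' - c = l * (a ⬝ᵥ z - c)) :
    ∃ ℓ : Set (Fin 2 → F), IsAffineLine ℓ ∧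
      (fun v => M.mulVec v + z) '' ℓ = (fun v => N.mulVec v + z') '' ℓ := by
  have key : ∀ x, a ⬝ᵥ (N *ᵥ x + z') - c = l * (a ⬝ᵥ (M *ᵥ x + z) - c) := by
    intro x
    rw [dotProduct_add, dotProduct_add, dotProduct_mulVec, dotProduct_mulVec, h1, smul_dotProduct,
      smul_eq_mul]
    linear_combination h2
  have surj : ∀ (P : Matrix (Fin 2) (Fin 2) F), P.det ≠ 0 → ∀ (p y : Fin 2 → F),
      ∃ x, P *ᵥ x + p = y := by
    intro P hP p y
    refine ⟨P⁻¹ *ᵥ (y - p), ?_⟩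
    rw [mulVec_mulVec, mul_nonsing_inv _ (isUnit_iff_ne_zero.2 hP), one_mulVec, sub_add_cancel]
  have im : ∀ (P : Matrix (Fin 2) (Fin 2) F), P.det ≠ 0 → ∀ (p : Fin 2 → F),
      (fun v => P *ᵥ v + p) '' {x | a ⬝ᵥ (P *ᵥ x + p) = c} = {y | a ⬝ᵥ y = c} := by
    intro P hP p
    ext y
    constructor
    · rintro ⟨x, hx, rfl⟩
      exact hx
    · intro hy
      obtain ⟨x, hx⟩ := surj P hP p y
      refine ⟨x, ?_, hx⟩
      change a ⬝ᵥ (P *ᵥ x + p) = c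
      rw [hx]
      exact hy
  have hset : {x | a ⬝ᵥ (M *ᵥ x + z) = c} = {x | a ⬝ᵥ (N *ᵥ x + z') = c} := by
    ext x
    have := key x
    simp only [Set.mem_ofPred_eq]
    rw [← sub_eq_zero, ← sub_eq_zero (a := a ⬝ᵥ (N *ᵥ x + z')), this]
    simp [hl]
  refine ⟨{x | a ⬝ᵥ (M *ᵥ x + z) = c}, ?_, ?_⟩
  · have hb : a ᵥ* M ≠ 0 := by
      intro h0
      exact hM (exists_vecMul_eq_zero_iff.1 ⟨a, ha, h0⟩)
    generalize hbd : a ᵥ* M = b at hb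
    have hS : {x | a ⬝ᵥ (M *ᵥ x + z) = c} = {x | b 0 * x 0 + b 1 * x 1 = c - a ⬝ᵥ z} := by
      ext x
      simp only [Set.mem_ofPred_eq]
      rw [dotProduct_add, dotProduct_mulVec, hbd, eq_sub_iff_add_eq]
      simp [dotProduct, Fin.sum_univ_two]
    rw [hS]
    generalize c - a ⬝ᵥ z = d
    by_cases hb0 : b 0 = 0
    · have hb1 : b 1 ≠ 0 := by
        intro hb1
        apply hb
        ext i
        fin_cases i <;> simp [hb0, hb1]
      refine ⟨![0, d / b 1], ![1, 0], ?_, ?_⟩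
      · intro h
        simpa using congrFun h 0
      · ext x
        simp only [Set.mem_ofPred_eq, hb0]
        constructor
        · intro h
          refine ⟨x 0, ?_⟩
          ext i
          fin_cases i
          · simp
          · simp
            field_simp
            linear_combination h
        · rintro ⟨t, rfl⟩
          simp
          field_simp
    · refine ⟨![d / b 0, 0], ![-(b 1 / b 0), 1], ?_, ?_⟩
      · intro h
        simpa using congrFun h 1
      · ext x
        simp only [Set.mem_ofPred_eq]
        constructor
        · intro h
          refine ⟨x 1, ?_⟩
          ext i
          fin_cases i
          · simp
            field_simp
            linear_combination h
          · simp
        · rintro ⟨t, rfl⟩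
          simp
          field_simp
          ring
  · rw [im M hM z, hset, im N hN z']

open Matrix in
lemma agl_meet_of_eigen {F : Type*} [Field F] (M N : Matrix (Fin 2) (Fin 2) F)
    (hM : M.det ≠ 0) (hN : N.det ≠ 0) (z z' : Fin 2 → F) (l : F) (hl1 : l ≠ 1)
    (hd : (N - l • M).det = 0) :
    ∃ ℓ : Set (Fin 2 → F), IsAffineLine ℓ ∧
      (fun v => M.mulVec v + z) '' ℓ = (fun v => N.mulVec v + z') '' ℓ := by
  obtain ⟨a, ha, h⟩ := exists_vecMul_eq_zero_iff.2 hd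
  rw [vecMul_sub, vecMul_smul, sub_eq_zero] at h
  have hl : l ≠ 0 := by
    rintro rfl
    rw [zero_smul] at h
    exact hN (exists_vecMul_eq_zero_iff.1 ⟨a, ha, h⟩)
  have h1 : 1 - l ≠ 0 := sub_ne_zero.2 (Ne.symm hl1)
  refine agl_meet_of_functional M N hM hN z z' a ha l
    ((a ⬝ᵥ z' - l * (a ⬝ᵥ z)) / (1 - l)) hl h ?_
  field_simp
  ring

open Matrix in
lemma agl_meet_of_eq {F : Type*} [Field F] (M : Matrix (Fin 2) (Fin 2) F)
    (hM : M.det ≠ 0) (z z' : Fin 2 → F) :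
    ∃ ℓ : Set (Fin 2 → F), IsAffineLine ℓ ∧
      (fun v => M.mulVec v + z) '' ℓ = (fun v => M.mulVec v + z') '' ℓ := by
  obtain ⟨a, ha, h⟩ : ∃ a : Fin 2 → F, a ≠ 0 ∧ a ⬝ᵥ z' = a ⬝ᵥ z := by
    by_cases hz : z' = z
    · exact ⟨![1, 0], fun h => by simpa using congrFun h 0, by rw [hz]⟩
    · refine ⟨![z' 1 - z 1, z 0 - z' 0], fun h => hz ?_, ?_⟩
      · have h0 := congrFun h 0
        have h1 := congrFun h 1
        simp at h0 h1
        ext i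
        fin_cases i
        · exact (sub_eq_zero.1 h1).symm
        · exact sub_eq_zero.1 h0
      · simp [dotProduct, Fin.sum_univ_two]
        ring
  exact agl_meet_of_functional M M hM hM z z' a ha 1 0 one_ne_zero (by simp) (by simp [h])

/-- Matrix of type `i`: among the three vectors `(1,0)`, `(0,1)`, `(1,1)` (numbered `0,1,2`),
the `i`-th one is an eigenvector for `s`, and the next one (cyclically) for `r`. -/
def aglMat {F : Type*} [Field F] (i : Fin 3) (s r : F) : Matrix (Fin 2) (Fin 2) F :=
  if i = 0 then !![s, 0; 0, r] else if i = 1 then !![r, 0; r - s, s] else !![r, s - r; 0, s]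

lemma aglMat_det {F : Type*} [Field F] (i : Fin 3) (s r : F) : (aglMat i s r).det = s * r := by
  fin_cases i <;> simp [aglMat, Matrix.det_fin_two] <;> ring

lemma aglMat_pencil_same {F : Type*} [Field F] (i : Fin 3) (s r s' r' l : F) :
    (aglMat i s' r' - l • aglMat i s r).det = (r' - l * r) * (s' - l * s) := by
  fin_cases i <;> simp [aglMat, Matrix.det_fin_two] <;> ring

lemma aglMat_pencil_diff {F : Type*} [Field F] (i j : Fin 3) (hij : i ≠ j) (s r s' r' l : F) :
    (aglMat j s' r' - l • aglMat i s r).det = (r' - l * s) * (s' - l * r) := by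
  fin_cases i <;> fin_cases j <;> first | exact absurd rfl hij | skip
  all_goals simp [aglMat, Matrix.det_fin_two]
  all_goals ring

lemma aglMat_inj {F : Type*} [Field F] (i j : Fin 3) (s r s' r' : F)
    (h1 : i ≠ 0 → s ≠ r) (h2 : j ≠ 0 → s' ≠ r')
    (h : aglMat i s r = aglMat j s' r') : i = j ∧ s = s' ∧ r = r' := by
  have h00 := congrFun (congrFun h 0) 0
  have h01 := congrFun (congrFun h 0) 1
  have h10 := congrFun (congrFun h 1) 0
  have h11 := congrFun (congrFun h 1) 1
  clear h
  fin_cases i <;> fin_cases j <;> simp [aglMat] at h00 h01 h10 h11 h1 h2 ⊢ <;> grind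

/-- The explicit family of affine maps. -/
def aglMap {F : Type*} [Field F] (x : (Fin 3 × Fˣ) × Fˣ × (Fin 2 → F)) :
    (Fin 2 → F) → (Fin 2 → F) :=
  fun v => (aglMat x.1.1 ((x.1.2 : F) * x.2.1) (x.2.1 : F)).mulVec v + x.2.2

lemma agl_meet_family {F : Type*} [Field F] (i j : Fin 3) (k k' r r' : Fˣ) (z z' : Fin 2 → F)
    (h : i ≠ j → k' ≠ k⁻¹) :
    ∃ ℓ : Set (Fin 2 → F), IsAffineLine ℓ ∧
      aglMap ((i, k), r, z) '' ℓ = aglMap ((j, k'), r', z') '' ℓ := by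
  have hd : ∀ (i : Fin 3) (k r : Fˣ), (aglMat i ((k : F) * r) (r : F)).det ≠ 0 := by
    intro i k r
    rw [aglMat_det]
    exact mul_ne_zero (mul_ne_zero k.ne_zero r.ne_zero) r.ne_zero
  have hk := k.ne_zero
  have hk' := k'.ne_zero
  have hr := r.ne_zero
  have hr' := r'.ne_zero
  by_cases hij : i = j
  · subst hij
    by_cases e1 : (r' : F) = r
    · by_cases e2 : (k' : F) = k
      · obtain rfl : r' = r := Units.ext e1
        obtain rfl : k' = k := Units.ext e2
        exact agl_meet_of_eq _ (hd _ _ _) z z'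
      · refine agl_meet_of_eigen _ _ (hd i k r) (hd i k' r') z z' ((k' : F) / k) ?_ ?_
        · rw [Ne, div_eq_one_iff_eq hk]
          exact e2
        · rw [aglMat_pencil_same, e1]
          field_simp
          ring
    · refine agl_meet_of_eigen _ _ (hd i k r) (hd i k' r') z z' ((r' : F) / r) ?_ ?_
      · rw [Ne, div_eq_one_iff_eq hr]
        exact e1
      · rw [aglMat_pencil_same]
        field_simp
        ring
  · by_cases e1 : (r' : F) = k * r
    · refine agl_meet_of_eigen _ _ (hd i k r) (hd j k' r') z z' ((k' : F) * r' / r) ?_ ?_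
      · rw [Ne, div_eq_one_iff_eq hr, e1]
        intro h3
        apply h hij
        rw [eq_inv_iff_mul_eq_one]
        ext
        push_cast
        apply mul_right_cancel₀ hr
        linear_combination h3
      · rw [aglMat_pencil_diff _ _ hij]
        field_simp
        ring
    · refine agl_meet_of_eigen _ _ (hd i k r) (hd j k' r') z z' ((r' : F) / (k * r)) ?_ ?_
      · rw [Ne, div_eq_one_iff_eq (mul_ne_zero hk hr)]
        exact e1
      · rw [aglMat_pencil_diff _ _ hij]
        field_simp
        ring

/-- The common construction: `c` is the number of `k` with `k = k⁻¹`. -/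
lemma agl_construction (F : Type*) [Field F] [Fintype F] (c : ℕ)
    (hc : Nat.card {k : Fˣ // k = k⁻¹} = c) :
    ∃ T : Set ((Fin 2 → F) → (Fin 2 → F)),
      (∀ f ∈ T, ∃ (M : GL (Fin 2) F) (z : Fin 2 → F),
        f = fun v => (M : Matrix (Fin 2) (Fin 2) F).mulVec v + z) ∧
      (∀ f ∈ T, ∀ g ∈ T, ∃ ℓ : Set (Fin 2 → F), IsAffineLine ℓ ∧ f '' ℓ = g '' ℓ) ∧
      2 * T.ncard = Fintype.card F ^ 2 * (Fintype.card F - 1) *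
        (3 * (Fintype.card F - 1) - c) := by
  classical
  let e := Fintype.equivFin Fˣ
  let I : Finset Fˣ := {k | k = k⁻¹}
  let L : Finset Fˣ := {k | e k < e k⁻¹}
  let L' : Finset Fˣ := {k | e k⁻¹ < e k}
  let A0 : Finset (Fin 3 × Fˣ) := ({0} : Finset (Fin 3)) ×ˢ (L ∪ I) ∪ ({1, 2} : Finset (Fin 3)) ×ˢ L
  have hI : I.card = c := by
    rw [← hc, Nat.card_eq_fintype_card, Fintype.card_subtype]
  have hLL : L'.card = L.card := by
    refine Finset.card_bij (fun k _ => k⁻¹) ?_ ?_ ?_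
    · intro k hk
      simpa [L, L'] using hk
    · intro a _ b _ h
      exact inv_injective h
    · intro b hb
      exact ⟨b⁻¹, by simpa [L, L'] using hb, inv_inv b⟩
  have hdis : Disjoint L I := by
    rw [Finset.disjoint_left]
    intro k hk hk'
    simp only [L, I, Finset.mem_filter, Finset.mem_univ, true_and] at hk hk'
    rw [← hk'] at hk
    exact lt_irrefl _ hk
  have hdis2 : Disjoint (L ∪ I) L' := by
    rw [Finset.disjoint_left]
    intro k hk hk'
    simp only [L, L', I, Finset.mem_union, Finset.mem_filter, Finset.mem_univ, true_and] at hk hk'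
    rcases hk with hk | hk
    · exact lt_asymm hk hk'
    · rw [← hk] at hk'
      exact lt_irrefl _ hk'
  have huniv : (L ∪ I) ∪ L' = Finset.univ := by
    ext k
    simp only [L, L', I, Finset.mem_union, Finset.mem_filter, Finset.mem_univ, true_and, iff_true]
    rcases lt_trichotomy (e k) (e k⁻¹) with h | h | h
    · exact Or.inl (Or.inl h)
    · exact Or.inl (Or.inr (e.injective h))
    · exact Or.inr h
  have hcU : Fintype.card Fˣ = Fintype.card F - 1 := Fintype.card_units F
  have hcount : L.card + c + L.card = Fintype.card F - 1 := by
    rw [← hcU, ← Finset.card_univ, ← huniv, Finset.card_union_of_disjoint hdis2,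
      Finset.card_union_of_disjoint hdis, hLL, hI]
  have hA0 : A0.card = L.card + c + 2 * L.card := by
    rw [Finset.card_union_of_disjoint, Finset.card_product, Finset.card_product,
      Finset.card_union_of_disjoint hdis, hI]
    · simp
    · rw [Finset.disjoint_left]
      rintro ⟨i, k⟩ h1 h2
      simp only [Finset.mem_product, Finset.mem_singleton, Finset.mem_insert] at h1 h2
      rw [h1.1] at h2
      simp at h2
  have hmem : ∀ i k, (i, k) ∈ A0 → e k ≤ e k⁻¹ ∧ (i ≠ 0 → k ≠ k⁻¹) := by
    intro i k h
    simp only [A0, L, I, Finset.mem_union, Finset.mem_product, Finset.mem_singleton,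
      Finset.mem_insert, Finset.mem_filter, Finset.mem_univ, true_and] at h
    rcases h with ⟨h0, h | h⟩ | ⟨h0, h⟩
    · exact ⟨h.le, fun h1 => absurd h0 h1⟩
    · exact ⟨by rw [← h], fun h1 => absurd h0 h1⟩
    · exact ⟨h.le, fun _ h1 => by rw [← h1] at h; exact lt_irrefl _ h⟩
  let A : Finset ((Fin 3 × Fˣ) × Fˣ × (Fin 2 → F)) := A0 ×ˢ (Finset.univ ×ˢ Finset.univ)
  have hinj : Set.InjOn aglMap (A : Set ((Fin 3 × Fˣ) × Fˣ × (Fin 2 → F))) := by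
    rintro ⟨⟨i, k⟩, r, z⟩ hx ⟨⟨j, k'⟩, r', z'⟩ hy h
    have hx2 := (hmem i k (Finset.mem_product.1 (Finset.mem_coe.1 hx)).1).2
    have hy2 := (hmem j k' (Finset.mem_product.1 (Finset.mem_coe.1 hy)).1).2
    have hne : ∀ (k r : Fˣ), k ≠ k⁻¹ → (k : F) * r ≠ r := by
      intro k r hk h
      apply hk
      have : k = 1 := by
        ext
        simpa using h
      simp [this]
    have hz : z = z' := by
      simpa [aglMap] using congrFun h 0
    subst hz
    have hM : aglMat i ((k : F) * r) (r : F) = aglMat j ((k' : F) * r') (r' : F) := by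
      apply Matrix.mulVec_injective
      funext v
      simpa [aglMap] using congrFun h v
    obtain ⟨rfl, h1, h2⟩ := aglMat_inj i j _ _ _ _ (fun h => hne _ _ (hx2 h))
      (fun h => hne _ _ (hy2 h)) hM
    obtain rfl : r = r' := Units.ext h2
    obtain rfl : k = k' := Units.ext (mul_right_cancel₀ r.ne_zero h1)
    rfl
  refine ⟨aglMap '' (A : Set ((Fin 3 × Fˣ) × Fˣ × (Fin 2 → F))), ?_, ?_, ?_⟩
  · rintro f ⟨⟨⟨i, k⟩, r, z⟩, -, rfl⟩
    refine ⟨Matrix.GeneralLinearGroup.mkOfDetNeZero (aglMat i ((k : F) * r) (r : F)) ?_, z, rfl⟩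
    rw [aglMat_det]
    exact mul_ne_zero (mul_ne_zero k.ne_zero r.ne_zero) r.ne_zero
  · rintro f ⟨⟨⟨i, k⟩, r, z⟩, hx, rfl⟩ g ⟨⟨⟨j, k'⟩, r', z'⟩, hy, rfl⟩
    have hx := hmem i k (Finset.mem_product.1 (Finset.mem_coe.1 hx)).1
    have hy := hmem j k' (Finset.mem_product.1 (Finset.mem_coe.1 hy)).1
    apply agl_meet_family
    rintro hij rfl
    rw [inv_inv] at hy
    have he : k = k⁻¹ := e.injective (le_antisymm hx.1 hy.1)
    by_cases hi : i = 0
    · exact hy.2 (fun hj => hij (hi.trans hj.symm)) he.symm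
    · exact hx.2 hi he
  · rw [hinj.ncard_image, Set.ncard_coe_finset]
    have hA : A.card = (3 * L.card + c) * ((Fintype.card F - 1) * Fintype.card F ^ 2) := by
      simp only [A, Finset.card_product, hA0, Finset.card_univ, hcU, Fintype.card_fun,
        Fintype.card_fin]
      ring
    rw [hA]
    have : 3 * (Fintype.card F - 1) - c = 2 * (3 * L.card + c) := by omega
    rw [this]
    ring

/-- **AGL(2,q) on lines does not have the EKR property (Theorem 5.9).**  There is an
intersecting set of affine maps, for the action on affine lines, of size
`q²(q-1)(3q-5)/2` when `q` is odd and `q²(q-1)(3q-4)/2` when `q` is even; for `q ≥ 4`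
these are larger than a line stabilizer, which has size `q²(q-1)²`. -/
theorem agl2_large_intersecting_set (q : ℕ) (hq : IsPrimePow q)
    (F : Type*) [Field F] [Fintype F] (hF : Fintype.card F = q) :
    (Odd q → ∃ T : Set ((Fin 2 → F) → (Fin 2 → F)),
      (∀ f ∈ T, ∃ (M : GL (Fin 2) F) (z : Fin 2 → F),
        f = fun v => (M : Matrix (Fin 2) (Fin 2) F).mulVec v + z) ∧
      (∀ f ∈ T, ∀ g ∈ T, ∃ ℓ : Set (Fin 2 → F), IsAffineLine ℓ ∧ f '' ℓ = g '' ℓ) ∧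
      2 * T.ncard = q ^ 2 * (q - 1) * (3 * q - 5) ∧
      (4 ≤ q → q ^ 2 * (q - 1) ^ 2 < T.ncard)) ∧
    (Even q → ∃ T : Set ((Fin 2 → F) → (Fin 2 → F)),
      (∀ f ∈ T, ∃ (M : GL (Fin 2) F) (z : Fin 2 → F),
        f = fun v => (M : Matrix (Fin 2) (Fin 2) F).mulVec v + z) ∧
      (∀ f ∈ T, ∀ g ∈ T, ∃ ℓ : Set (Fin 2 → F), IsAffineLine ℓ ∧ f '' ℓ = g '' ℓ) ∧
      2 * T.ncard = q ^ 2 * (q - 1) * (3 * q - 4) ∧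
      (4 ≤ q → q ^ 2 * (q - 1) ^ 2 < T.ncard)) := by
  subst hF
  have hpos : 1 < Fintype.card F := Fintype.one_lt_card
  have hinvol : ∀ k : Fˣ, k = k⁻¹ ↔ k = 1 ∨ k = -1 := by
    intro k
    rw [eq_inv_iff_mul_eq_one, ← Units.val_inj, Units.val_mul, Units.val_one, mul_self_eq_one_iff,
      ← Units.val_inj, ← Units.val_inj]
    simp
  refine ⟨fun hodd => ?_, fun heven => ?_⟩
  · have h2 : ringChar F ≠ 2 := fun h =>
      (Nat.not_even_iff_odd.2 hodd) (Nat.even_iff.2 (FiniteField.even_card_of_char_two h))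
    have hne : (1 : Fˣ) ≠ -1 := by
      intro h
      have := congrArg (Units.val) h
      simp at this
      exact Ring.neg_one_ne_one_of_char_ne_two h2 this.symm
    have hc : Nat.card {k : Fˣ // k = k⁻¹} = 2 := by
      simp only [hinvol]
      exact Set.ncard_pair hne
    obtain ⟨T, h1, h3, h4⟩ := agl_construction F 2 hc
    have h5 : 3 * (Fintype.card F - 1) - 2 = 3 * Fintype.card F - 5 := by omega
    rw [h5] at h4
    refine ⟨T, h1, h3, h4, fun hq4 => ?_⟩
    have h6 : Fintype.card F ^ 2 * (Fintype.card F - 1) * (2 * (Fintype.card F - 1)) <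
        Fintype.card F ^ 2 * (Fintype.card F - 1) * (3 * Fintype.card F - 5) :=
      Nat.mul_lt_mul_of_pos_left (by omega) (Nat.mul_pos (by positivity) (by omega))
    rw [← h4] at h6
    have h7 : Fintype.card F ^ 2 * (Fintype.card F - 1) * (2 * (Fintype.card F - 1)) =
      2 * (Fintype.card F ^ 2 * (Fintype.card F - 1) ^ 2) := by ring
    omega
  · have h2 : ringChar F = 2 := by
      by_contra h
      have := FiniteField.odd_card_of_char_ne_two h
      rw [Nat.even_iff] at heven
      omega
    have : CharP F 2 := by
      rw [← h2]
      infer_instance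
    have heq : (-1 : Fˣ) = 1 := by
      ext
      simp [CharTwo.neg_eq]
    have hc : Nat.card {k : Fˣ // k = k⁻¹} = 1 := by
      simp only [hinvol, heq, or_self]
      exact Set.ncard_singleton (1 : Fˣ)
    obtain ⟨T, h1, h3, h4⟩ := agl_construction F 1 hc
    have h5 : 3 * (Fintype.card F - 1) - 1 = 3 * Fintype.card F - 4 := by omega
    rw [h5] at h4
    refine ⟨T, h1, h3, h4, fun hq4 => ?_⟩
    have h6 : Fintype.card F ^ 2 * (Fintype.card F - 1) * (2 * (Fintype.card F - 1)) <
        Fintype.card F ^ 2 * (Fintype.card F - 1) * (3 * Fintype.card F - 4) :=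
      Nat.mul_lt_mul_of_pos_left (by omega) (Nat.mul_pos (by positivity) (by omega))
    rw [← h4] at h6
    have h7 : Fintype.card F ^ 2 * (Fintype.card F - 1) * (2 * (Fintype.card F - 1)) =
      2 * (Fintype.card F ^ 2 * (Fintype.card F - 1) ^ 2) := by ring
    omega
end

section
/- Let q be a prime power and F a finite field with q elements. If 𝓕 is an intersecting subset of AGL(2,F) for its action on the affine lines of F² (i.e., for any two elements f, g ∈ 𝓕 there exists an affine line ℓ with f(ℓ) = g(ℓ)), then |𝓕| ≤ q³(q−1)². -/
/-- The matrix `s I + t A`, where `A` has characteristic polynomial `X² - X - c`. -/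
def singerMat {F : Type*} [Field F] (c s t : F) : Matrix (Fin 2) (Fin 2) F :=
  !![s, t * c; t, s + t]

lemma exists_no_root (F : Type*) [Field F] [Fintype F] : ∃ c : F, ∀ x : F, x * x - x ≠ c := by
  by_contra! h
  have hs : Function.Surjective (fun x : F => x * x - x) := h
  have hi := Finite.injective_iff_surjective.mpr hs
  exact zero_ne_one (hi (by simp : (fun x : F => x * x - x) 0 = (fun x : F => x * x - x) 1))

lemma singer_det {F : Type*} [Field F] {c : F} (hc : ∀ x : F, x * x - x ≠ c) {s t : F}
    (h : (singerMat c s t).det = 0) : s = 0 ∧ t = 0 := by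
  simp only [singerMat, Matrix.det_fin_two_of] at h
  by_cases ht : t = 0
  · subst ht
    simpa using h
  · exfalso
    apply hc (-s / t)
    field_simp
    linear_combination h

/-- First coordinate of the representative of a direction. -/
def repS {F : Type*} [Field F] : Option F → F
  | none => 1
  | some r => r

/-- Second coordinate of the representative of a direction. -/
def repT {F : Type*} [Field F] : Option F → F
  | none => 0
  | some _ => 1

lemma rep_ne {F : Type*} [Field F] {c : F} (hc : ∀ x : F, x * x - x ≠ c) (o : Option F) :
    (singerMat c (repS o) (repT o)).det ≠ 0 := by
  intro h
  have := singer_det hc h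
  cases o <;> simp [repS, repT] at this

lemma rep_eq {F : Type*} [Field F] {o o' : Option F} {k : F} (h1 : repS o' - k * repS o = 0)
    (h2 : repT o' - k * repT o = 0) : o = o' := by
  cases o <;> cases o' <;> simp [repS, repT] at h1 h2 ⊢
  · subst h2
    simp at h1
  · have hk : k = 1 := by linear_combination -h2
    subst hk
    linear_combination -h1

lemma exists_dir {F : Type*} [Field F] {M N : Matrix (Fin 2) (Fin 2) F} {y z : Fin 2 → F}
    {l : Set (Fin 2 → F)} (hl : IsAffineLine l)
    (h : (fun v => M.mulVec v + y) '' l = (fun v => N.mulVec v + z) '' l) :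
    ∃ w : Fin 2 → F, w ≠ 0 ∧ ∃ k : F, M.mulVec w = k • N.mulVec w := by
  obtain ⟨u, w, hw, rfl⟩ := hl
  refine ⟨w, hw, ?_⟩
  have key : ∀ t : F, ∃ s : F, M.mulVec (u + t • w) + y = N.mulVec (u + s • w) + z := by
    intro t
    have : M.mulVec (u + t • w) + y ∈ (fun v => M.mulVec v + y) '' {p | ∃ t : F, p = u + t • w} :=
      ⟨_, ⟨t, rfl⟩, rfl⟩
    rw [h] at this
    obtain ⟨p, ⟨s, rfl⟩, hs⟩ := this
    exact ⟨s, hs.symm⟩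
  obtain ⟨a, ha⟩ := key 0
  obtain ⟨b, hb⟩ := key 1
  refine ⟨b - a, ?_⟩
  simp only [Matrix.mulVec_add, Matrix.mulVec_smul, zero_smul, one_smul, add_zero] at ha hb
  ext i
  have ha' := congrFun ha i
  have hb' := congrFun hb i
  simp only [Pi.add_apply, Pi.smul_apply, smul_eq_mul] at ha' hb' ⊢
  linear_combination hb' - ha'

lemma rep_inj {F : Type*} [Field F] {c : F} (hc : ∀ x : F, x * x - x ≠ c) (o o' : Option F)
    (M N : GL (Fin 2) F) (w : Fin 2 → F) (hw : w ≠ 0) (k : F)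
    (hk : (M : Matrix (Fin 2) (Fin 2) F).mulVec w
      = k • (N : Matrix (Fin 2) (Fin 2) F).mulVec w)
    (h : (M : Matrix (Fin 2) (Fin 2) F) * singerMat c (repS o) (repT o)
      = (N : Matrix (Fin 2) (Fin 2) F) * singerMat c (repS o') (repT o')) : o = o' := by
  set C := singerMat c (repS o) (repT o) with hC
  set C' := singerMat c (repS o') (repT o') with hC'
  have hu : IsUnit C.det := isUnit_iff_ne_zero.mpr (rep_ne hc o)
  have hv : C.mulVec (C⁻¹.mulVec w) = w := by
    rw [Matrix.mulVec_mulVec, Matrix.mul_nonsing_inv _ hu, Matrix.one_mulVec]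
  set v := C⁻¹.mulVec w
  have hv0 : v ≠ 0 := by
    intro h0
    rw [h0, Matrix.mulVec_zero] at hv
    exact hw hv.symm
  have hz : (N : Matrix (Fin 2) (Fin 2) F).mulVec ((C' - k • C).mulVec v) = 0 := by
    rw [Matrix.sub_mulVec, Matrix.mulVec_sub, Matrix.mulVec_mulVec, ← h, ← Matrix.mulVec_mulVec,
      Matrix.smul_mulVec, hv, hk, Matrix.mulVec_smul, sub_self]
  have hz2 : (C' - k • C).mulVec v = 0 := by
    have := congrArg ((N⁻¹ : GL (Fin 2) F) : Matrix (Fin 2) (Fin 2) F).mulVec hz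
    rwa [Matrix.mulVec_mulVec, Units.inv_mul, Matrix.one_mulVec, Matrix.mulVec_zero] at this
  have hd : (C' - k • C).det = 0 := Matrix.exists_mulVec_eq_zero_iff.mp ⟨v, hv0, hz2⟩
  have he : C' - k • C = singerMat c (repS o' - k * repS o) (repT o' - k * repT o) := by
    rw [hC, hC']
    ext i j
    fin_cases i <;> fin_cases j <;> simp [singerMat] <;> ring
  rw [he] at hd
  obtain ⟨h1, h2⟩ := singer_det hc hd
  exact rep_eq h1 h2

/-- **Upper bound for intersecting sets in AGL(2,q) acting on lines (Theorem 1.2).**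
If `𝓕` is a set of affine maps `v ↦ M v + z` (with `M ∈ GL(2,F)`) which is intersecting
for the action on the affine lines of `F²`, then `|𝓕| ≤ q³(q-1)²`. -/
theorem agl2_intersecting_upper_bound (q : ℕ) (hq : IsPrimePow q)
    (F : Type*) [Field F] [Fintype F] (hF : Fintype.card F = q)
    (𝓕 : Set ((Fin 2 → F) → (Fin 2 → F)))
    (hmem : ∀ f ∈ 𝓕, ∃ (M : GL (Fin 2) F) (z : Fin 2 → F),
      f = fun v => (M : Matrix (Fin 2) (Fin 2) F).mulVec v + z)
    (hint : ∀ f ∈ 𝓕, ∀ g ∈ 𝓕, ∃ ℓ : Set (Fin 2 → F), IsAffineLine ℓ ∧ f '' ℓ = g '' ℓ) :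
    𝓕.ncard ≤ q ^ 3 * (q - 1) ^ 2 := by
  classical
  obtain ⟨c, hc⟩ := exists_no_root F
  choose! M z hMz using hmem
  let C : Option F → GL (Fin 2) F := fun o =>
    Matrix.GeneralLinearGroup.mkOfDetNeZero (singerMat c (repS o) (repT o)) (rep_ne hc o)
  let φ : 𝓕 × Option F → GL (Fin 2) F × (Fin 2 → F) := fun p => (M p.1 * C p.2, z p.1)
  have hφ : Function.Injective φ := by
    rintro ⟨⟨f, hf⟩, o⟩ ⟨⟨g, hg⟩, o'⟩ h
    obtain ⟨h1, h2⟩ := Prod.mk.inj h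
    simp only at h1 h2
    obtain ⟨l, hl, hfg⟩ := hint f hf g hg
    rw [hMz f hf, hMz g hg] at hfg
    obtain ⟨w, hw, k, hk⟩ := exists_dir hl hfg
    have ho : o = o' := by
      refine rep_inj hc o o' (M f) (M g) w hw k hk ?_
      exact congrArg (fun A : GL (Fin 2) F => (A : Matrix (Fin 2) (Fin 2) F)) h1
    subst ho
    have hM : M f = M g := mul_right_cancel h1
    have : f = g := by rw [hMz f hf, hMz g hg, hM, h2]
    subst this
    rfl
  have hcard := Nat.card_le_card_of_injective φ hφ
  rw [Nat.card_prod, Nat.card_prod, Matrix.card_GL_field, Nat.card_coe_set_eq] at hcard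
  simp only [Nat.card_eq_fintype_card, Fintype.card_option, hF, Fintype.card_fun, Fintype.card_fin,
    Fin.prod_univ_two] at hcard
  obtain ⟨r, rfl⟩ : ∃ r, q = r + 1 := ⟨q - 1, by have := hq.one_lt; omega⟩
  have e1 : (r + 1) ^ 2 - (r + 1) ^ ((0 : Fin 2) : ℕ) = r * (r + 2) := by
    apply Nat.sub_eq_of_eq_add; simp; ring
  have e2 : (r + 1) ^ 2 - (r + 1) ^ ((1 : Fin 2) : ℕ) = r * (r + 1) := by
    apply Nat.sub_eq_of_eq_add; simp; ring
  rw [e1, e2] at hcard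
  refine Nat.le_of_mul_le_mul_right (c := r + 1 + 1) (hcard.trans (le_of_eq ?_)) (by omega)
  rw [Nat.add_sub_cancel]
  ring
end
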